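/- arXiv:1910.08771 — 3 statements merged into one kernel-verified Lean document; each statement's English description precedes it below -/
import Mathlib

section
/- There are absolute constants C₁, C₂ > 0 (one may take C₁ = 1/(2 log 3), C₂ = 1/4) such that for any linear operator Φ : ℝ^{n×n} → ℝ^m and any positive integer s < n: if every matrix X = (x_1, …, x_n) with all columns 2s-sparse is the unique minimizer of inf ‖Z‖₁ subject to Φ(Z) = Φ(X), then m ≥ C₁·n·s·log(C₂·n/s). -/
/-!
The map `Φ` factors injectively through `ℝ^{n×n} ⧸ ker Φ`, normed by
`‖[X]‖ = inf {‖Z‖₁ : Φ Z = Φ X}`, and recovery says that `‖[X]‖ = ‖X‖₁` whenever every column of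
`X` is `2s`-sparse. A family of matrices with `s`-sparse columns, of norm `s` and mutual distance at
least `s`, therefore keeps its norms and distances in the quotient, where disjointness of the balls
of radius `s / 2` around its members bounds its cardinality by `3 ^ m`.

Such a family is obtained from a collection `C` of `s`-subsets of `Fin n` with pairwise
intersections of size at most `s / 2`: since `‖·‖₁` is a maximum over the columns, two matrices are
far apart once a single column is, so indicator vectors of members of `C` may be placed freely in
the `n` columns, giving `#C ^ n` matrices. A collection `C` to which no `s`-set can be added
satisfies `(n / (4 s)) ^ s ≤ #C ^ 2`, and taking logarithms in `#C ^ n ≤ 3 ^ m` gives the bound.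
-/

open scoped BigOperators
open scoped Classical

noncomputable section

/-- The l1 norm of the j-th column of X. -/
def colNorm1 {n : ℕ} (X : Matrix (Fin n) (Fin n) ℝ) (j : Fin n) : ℝ := ∑ i, |X i j|

/-- The matrix norm ‖X‖₁ := max_j |x_j|₁. -/
def mnorm1 {n : ℕ} (X : Matrix (Fin n) (Fin n) ℝ) : ℝ := ⨆ j, colNorm1 X j

/-- Trace inner product on matrices. -/
def minner {n : ℕ} (A B : Matrix (Fin n) (Fin n) ℝ) : ℝ := ∑ i, ∑ j, A i j * B i j

/-- Euclidean norm on ℝ^m. -/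
def vnorm2 {m : ℕ} (y : Fin m → ℝ) : ℝ := Real.sqrt (∑ k, (y k)^2)

/-- Frobenius norm. -/
def frob {n : ℕ} (X : Matrix (Fin n) (Fin n) ℝ) : ℝ := Real.sqrt (∑ i, ∑ j, (X i j)^2)

/-- H_S : the matrix agreeing with H on the sparsity pattern S and zero elsewhere. -/
def restrict {n : ℕ} (S : Fin n → Finset (Fin n)) (H : Matrix (Fin n) (Fin n) ℝ) :
    Matrix (Fin n) (Fin n) ℝ := Matrix.of fun i j => if i ∈ S j then H i j else 0

/-- An s-sparsity pattern: S_j ⊆ rows, |S_j| ≤ s for every column j. -/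
def SparsityPattern (n s : ℕ) (S : Fin n → Finset (Fin n)) : Prop := ∀ j, (S j).card ≤ s

/-- Σ_s^{n×n}: every column has at most s nonzero entries. -/
def ColSparse {n : ℕ} (s : ℕ) (X : Matrix (Fin n) (Fin n) ℝ) : Prop :=
  ∀ j, ((Finset.univ : Finset (Fin n)).filter fun i => X i j ≠ 0).card ≤ s

/-- l1-column-flat: all columns have the same l1-norm. -/
def Flat {n : ℕ} (X : Matrix (Fin n) (Fin n) ℝ) : Prop :=
  ∀ j k, colNorm1 X j = colNorm1 X k

section Combinatorics

open Finset

theorem exists_pairwise_not_card_le_card_mul {α : Type*} (U : Finset α) {r : α → α → Prop}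
    [DecidableRel r] [Std.Symm r] (hrefl : ∀ a ∈ U, r a a) {B : ℕ}
    (hB : ∀ a ∈ U, #{b ∈ U | r a b} ≤ B) :
    ∃ C ⊆ U, (C : Set α).Pairwise (fun a b => ¬ r a b) ∧ #U ≤ #C * B := by
  obtain ⟨C, hC⟩ := Finset.exists_maximal
    (s := U.powerset.filter fun C : Finset α => (C : Set α).Pairwise fun a b => ¬ r a b)
    ⟨∅, by simp⟩
  obtain ⟨hCU, hpair⟩ : C ⊆ U ∧ (C : Set α).Pairwise fun a b => ¬ r a b := by
    simpa using hC.prop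
  have hcover : U ⊆ C.biUnion fun a => {b ∈ U | r a b} := by
    intro b hb
    by_contra hbcover
    have hfar : ∀ a ∈ C, ¬ r a b := by simpa [hb] using hbcover
    have hbC : b ∉ C := fun h => hfar b h (hrefl b hb)
    have hinsert : ((insert b C : Finset α) : Set α).Pairwise fun a b => ¬ r a b := by
      rw [coe_insert]
      exact hpair.insert fun a ha _ => ⟨fun h => hfar a ha (symm h), hfar a ha⟩
    have hle := hC.le_of_ge (y := insert b C)
      (by simpa [insert_subset_iff, hb, hCU] using hinsert) (subset_insert b C)
    exact hbC (hle (mem_insert_self b C))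
  refine ⟨C, hCU, hpair, (card_le_card hcover).trans (card_biUnion_le.trans ?_)⟩
  simpa using sum_le_card_nsmul C _ B fun a ha => hB a (hCU ha)

variable {α : Type*} [DecidableEq α]

/-- Each such `T` is counted through a `k`-subset `A` of `S ∩ T`, and then as a superset of `A`. -/
theorem card_filter_le_card_inter_le {U S : Finset α} (hSU : S ⊆ U) {s k : ℕ}
    (hks : k ≤ s) :
    #{T ∈ U.powersetCard s | k ≤ #(S ∩ T)} ≤ (#S).choose k * (#U - k).choose (s - k) := by
  have hcover : {T ∈ U.powersetCard s | k ≤ #(S ∩ T)} ⊆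
      (S.powersetCard k).biUnion fun A => {T ∈ U.powersetCard s | A ⊆ T} := by
    intro T hT
    obtain ⟨hTU, hk⟩ := mem_filter.1 hT
    obtain ⟨A, hA, hAk⟩ := exists_subset_card_eq hk
    obtain ⟨hAS, hAT⟩ := subset_inter_iff.1 hA
    exact mem_biUnion.2 ⟨A, mem_powersetCard.2 ⟨hAS, hAk⟩, mem_filter.2 ⟨hTU, hAT⟩⟩
  have hfiber : ∀ A ∈ S.powersetCard k,
      #{T ∈ U.powersetCard s | A ⊆ T} ≤ (#U - k).choose (s - k) := by
    intro A hA
    obtain ⟨hAS, rfl⟩ := mem_powersetCard.1 hA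
    exact (card_filter_powersetCard_subset A U s (hAS.trans hSU) hks).le
  simpa using (card_le_card hcover).trans
    (card_biUnion_le.trans (sum_le_card_nsmul _ _ _ hfiber))

theorem pow_mul_descFactorial_le_pow_mul_descFactorial {s n : ℕ} (hsn : s ≤ n) (k : ℕ) :
    n ^ k * s.descFactorial k ≤ s ^ k * n.descFactorial k := by
  induction k with
  | zero => simp
  | succ k ih =>
    have hstep : n * (s - k) ≤ s * (n - k) := by
      rw [Nat.mul_sub, Nat.mul_sub, Nat.mul_comm n s]
      gcongr
    calc n ^ (k + 1) * s.descFactorial (k + 1)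
        = n * (s - k) * (n ^ k * s.descFactorial k) := by rw [Nat.descFactorial_succ]; ring
      _ ≤ s * (n - k) * (s ^ k * n.descFactorial k) := Nat.mul_le_mul hstep ih
      _ = s ^ (k + 1) * n.descFactorial (k + 1) := by rw [Nat.descFactorial_succ]; ring

theorem pow_mul_choose_le_pow_mul_choose {s n : ℕ} (hsn : s ≤ n) (k : ℕ) :
    n ^ k * s.choose k ≤ s ^ k * n.choose k := by
  have h := pow_mul_descFactorial_le_pow_mul_descFactorial hsn k
  rw [Nat.descFactorial_eq_factorial_mul_choose, Nat.descFactorial_eq_factorial_mul_choose,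
    Nat.mul_left_comm, Nat.mul_left_comm (s ^ k)] at h
  exact Nat.le_of_mul_le_mul_left h k.factorial_pos

theorem exists_subset_powersetCard_card_inter_lt (U : Finset α) {s k : ℕ} (hks : k ≤ s)
    (hsU : s ≤ #U) :
    ∃ C ⊆ U.powersetCard s, (C : Set (Finset α)).Pairwise (fun S T => #(S ∩ T) < k) ∧
      #U ^ k ≤ s ^ k * (#C * s.choose k) := by
  have : Std.Symm fun S T : Finset α => k ≤ #(S ∩ T) :=
    ⟨fun S T h => by rwa [inter_comm]⟩
  obtain ⟨C, hCU, hpair, hcard⟩ := exists_pairwise_not_card_le_card_mul (U.powersetCard s)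
    (r := fun S T => k ≤ #(S ∩ T)) (B := s.choose k * (#U - k).choose (s - k))
    (fun S hS => by simpa [(mem_powersetCard.1 hS).2] using hks)
    (fun S hS => by
      obtain ⟨hSU, hSs⟩ := mem_powersetCard.1 hS
      rw [← hSs] at hks ⊢
      exact card_filter_le_card_inter_le hSU hks)
  refine ⟨C, hCU, fun S hS T hT hne => not_le.1 (hpair hS hT hne), ?_⟩
  rw [card_powersetCard] at hcard
  have hchoose : (#U).choose k ≤ #C * s.choose k * s.choose k := by
    refine Nat.le_of_mul_le_mul_right ?_
      (Nat.choose_pos (Nat.sub_le_sub_right hsU k) : 0 < (#U - k).choose (s - k))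
    calc (#U).choose k * (#U - k).choose (s - k)
        = (#U).choose s * s.choose k := (Nat.choose_mul hks).symm
      _ ≤ #C * (s.choose k * (#U - k).choose (s - k)) * s.choose k := by gcongr
      _ = #C * s.choose k * s.choose k * (#U - k).choose (s - k) := by ring
  refine Nat.le_of_mul_le_mul_right ?_ (Nat.choose_pos hks)
  calc #U ^ k * s.choose k
      ≤ s ^ k * (#U).choose k := pow_mul_choose_le_pow_mul_choose hsU k
    _ ≤ s ^ k * (#C * s.choose k * s.choose k) := by gcongr
    _ = s ^ k * (#C * s.choose k) * s.choose k := by ring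

theorem exists_subset_powersetCard_two_mul_card_inter_le (U : Finset α) {s : ℕ} (hs : 0 < s)
    (hsU : s ≤ #U) :
    ∃ C ⊆ U.powersetCard s, (C : Set (Finset α)).Pairwise (fun S T => 2 * #(S ∩ T) ≤ s) ∧
      (1 / 4 * #U / s : ℝ) ^ s ≤ (#C : ℝ) ^ 2 := by
  obtain ⟨C, hCU, hpair, hcard⟩ :=
    exists_subset_powersetCard_card_inter_lt U (k := s / 2 + 1) (by omega) hsU
  refine ⟨C, hCU, hpair.imp fun S T h => by omega, ?_⟩
  have hsR : (0 : ℝ) < s := by exact_mod_cast hs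
  have hratio : 1 ≤ (#U / s : ℝ) := (one_le_div hsR).2 (by exact_mod_cast hsU)
  have hpow : (#U / s : ℝ) ^ (s / 2 + 1) ≤ #C * 2 ^ s := by
    rw [div_pow, div_le_iff₀' (by positivity)]
    exact_mod_cast hcard.trans (by gcongr; exact Nat.choose_le_two_pow s _)
  have hsq : (#U / s : ℝ) ^ s ≤ (#C * 2 ^ s) ^ 2 := calc
    (#U / s : ℝ) ^ s ≤ (#U / s) ^ ((s / 2 + 1) * 2) := pow_le_pow_right₀ hratio (by omega)
    _ = ((#U / s) ^ (s / 2 + 1)) ^ 2 := pow_mul _ _ _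
    _ ≤ (#C * 2 ^ s) ^ 2 := by gcongr
  calc (1 / 4 * #U / s : ℝ) ^ s = (#U / s) ^ s / 4 ^ s := by rw [← div_pow]; ring
    _ ≤ (#C * 2 ^ s) ^ 2 / 4 ^ s := by gcongr
    _ = (#C : ℝ) ^ 2 := by
      rw [mul_pow, ← pow_mul, mul_comm s 2, pow_mul, show (2 : ℝ) ^ 2 = 4 by norm_num]
      exact mul_div_cancel_right₀ _ (by positivity)

end Combinatorics

section Packing

open Metric MeasureTheory Module Set

variable {E : Type*} [NormedAddCommGroup E] [NormedSpace ℝ E]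

theorem card_le_pow_finrank_of_separated [FiniteDimensional ℝ E] {R δ : ℝ} (hR : 0 ≤ R)
    (hδ : 0 < δ) (P : Finset E) (hP : ∀ x ∈ P, ‖x‖ ≤ R)
    (hsep : (P : Set E).Pairwise fun x y => δ ≤ ‖x - y‖) :
    (P.card : ℝ) ≤ (1 + 2 * R / δ) ^ finrank ℝ E := by
  borelize E
  let μ : Measure E := Measure.addHaar
  have hdisj : (P : Set E).PairwiseDisjoint fun x => ball x (δ / 2) := fun x hx y hy hxy =>
    ball_disjoint_ball (by rw [dist_eq_norm, add_halves]; exact hsep hx hy hxy)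
  have hsub : ⋃ x ∈ P, ball x (δ / 2) ⊆ ball (0 : E) (R + δ / 2) := by
    refine iUnion₂_subset fun x hx => ball_subset_ball' ?_
    rw [dist_zero_right, add_comm]
    gcongr
    exact hP x hx
  have hball (x : E) {ρ : ℝ} (hρ : 0 < ρ) :
      μ.real (ball x ρ) = ρ ^ finrank ℝ E * μ.real (ball 0 1) := by
    simp only [measureReal_def, μ.addHaar_ball_of_pos x hρ, ENNReal.toReal_mul,
      ENNReal.toReal_ofReal (pow_nonneg hρ.le _)]
  have hvol : (P.card : ℝ) * (δ / 2) ^ finrank ℝ E * μ.real (ball 0 1) ≤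
      (R + δ / 2) ^ finrank ℝ E * μ.real (ball 0 1) := calc
    (P.card : ℝ) * (δ / 2) ^ finrank ℝ E * μ.real (ball 0 1)
        = ∑ x ∈ P, μ.real (ball x (δ / 2)) := by
      simp only [hball _ (half_pos hδ), Finset.sum_const, nsmul_eq_mul, mul_assoc]
    _ = μ.real (⋃ x ∈ P, ball x (δ / 2)) :=
      (measureReal_biUnion_finset hdisj fun _ _ => measurableSet_ball).symm
    _ ≤ μ.real (ball 0 (R + δ / 2)) := measureReal_mono hsub
    _ = (R + δ / 2) ^ finrank ℝ E * μ.real (ball 0 1) := hball _ (by positivity)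
  have hpos : 0 < μ.real (ball (0 : E) 1) :=
    ENNReal.toReal_pos (measure_ball_pos μ 0 one_pos).ne' measure_ball_lt_top.ne
  have hcard := le_of_mul_le_mul_right hvol hpos
  rw [← le_div_iff₀ (by positivity), ← div_pow] at hcard
  rwa [show (R + δ / 2) / (δ / 2) = 1 + 2 * R / δ by field_simp; ring] at hcard

theorem card_le_pow_finrank_range_of_separated_fibers [FiniteDimensional ℝ E] {F ι : Type*}
    [AddCommGroup F] [Module ℝ F] [Fintype ι] (L : E →ₗ[ℝ] F) {R δ : ℝ} (hR : 0 ≤ R) (hδ : 0 < δ)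
    (x : ι → E) (hx : ∀ a, ‖x a‖ ≤ R)
    (hsep : Pairwise fun a b => ∀ z, L z = L (x a - x b) → δ ≤ ‖z‖) :
    (Fintype.card ι : ℝ) ≤ (1 + 2 * R / δ) ^ finrank ℝ (LinearMap.range L) := by
  have : IsClosed (LinearMap.ker L : Set E) := Submodule.closed_of_finiteDimensional _
  let p : ι → E ⧸ LinearMap.ker L := fun a => Submodule.Quotient.mk (x a)
  have hp : Pairwise fun a b => δ ≤ ‖p a - p b‖ := fun a b hab =>
    QuotientAddGroup.le_norm_iff.2 fun z hz =>
      hsep hab z (LinearMap.sub_mem_ker_iff.1 ((Submodule.Quotient.eq _).1 hz))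
  have hinj : Function.Injective p := fun a b hab => by
    by_contra hne
    exact hδ.not_ge (by simpa [hab] using hp hne)
  have hcard := card_le_pow_finrank_of_separated hR hδ (Finset.univ.image p)
    (Finset.forall_mem_image.2 fun a _ => (Submodule.Quotient.norm_mk_le _ (x a)).trans (hx a))
    (by
      rw [Finset.coe_image, Finset.coe_univ, image_univ]
      rintro _ ⟨a, rfl⟩ _ ⟨b, rfl⟩ hab
      exact hp fun h => hab (congrArg p h))
  rwa [Finset.card_image_of_injective _ hinj, Finset.card_univ,
    L.quotKerEquivRange.finrank_eq] at hcard

end Packing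

section Matrices

-- This norm is the maximal `ℓ₁`-norm of the rows, hence the transpose in comparisons with `mnorm1`.
attribute [local instance] Matrix.linftyOpNormedAddCommGroup Matrix.linftyOpNormedSpace

open Matrix Module

variable {n : ℕ} {F : Type*} [AddCommGroup F] [Module ℝ F]

theorem colNorm1_le_mnorm1 (X : Matrix (Fin n) (Fin n) ℝ) (j : Fin n) :
    colNorm1 X j ≤ mnorm1 X :=
  le_ciSup (Set.finite_range (colNorm1 X)).bddAbove j

theorem mnorm1_eq_norm_transpose (X : Matrix (Fin n) (Fin n) ℝ) : mnorm1 X = ‖Xᵀ‖ := by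
  simp only [mnorm1, linfty_opNorm_def, Finset.sup_univ_eq_ciSup, NNReal.coe_iSup]
  simp [colNorm1]

theorem card_le_pow_finrank_range_of_separated {ι : Type*} [Fintype ι]
    (Φ : Matrix (Fin n) (Fin n) ℝ →ₗ[ℝ] F) {R δ : ℝ} (hR : 0 ≤ R) (hδ : 0 < δ)
    (X : ι → Matrix (Fin n) (Fin n) ℝ) (hX : ∀ a, mnorm1 (X a) ≤ R)
    (hsep : Pairwise fun a b => ∀ Z, Φ Z = Φ (X a - X b) → δ ≤ mnorm1 Z) :
    (Fintype.card ι : ℝ) ≤ (1 + 2 * R / δ) ^ finrank ℝ (LinearMap.range Φ) := by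
  let e := transposeLinearEquiv (Fin n) (Fin n) ℝ ℝ
  have hsepT : Pairwise fun a b => ∀ Z : Matrix (Fin n) (Fin n) ℝ,
      (Φ ∘ₗ e.toLinearMap) Z = (Φ ∘ₗ e.toLinearMap) ((X a)ᵀ - (X b)ᵀ) → δ ≤ ‖Z‖ :=
    fun a b hab Z hZ => by
      simpa [mnorm1_eq_norm_transpose] using hsep hab Zᵀ (by simpa [e] using hZ)
  have hcard := card_le_pow_finrank_range_of_separated_fibers (Φ ∘ₗ e.toLinearMap) hR hδ
    (fun a => (X a)ᵀ) (fun a => (mnorm1_eq_norm_transpose (X a)).symm.trans_le (hX a)) hsepT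
  rwa [LinearMap.range_comp_of_range_eq_top Φ e.range] at hcard

/-- The matrix whose `j`-th column is the indicator vector of the set `S j`; the members of the
packing are of this form. -/
def colIndicator (S : Fin n → Finset (Fin n)) : Matrix (Fin n) (Fin n) ℝ :=
  of fun i j => if i ∈ S j then 1 else 0

theorem mnorm1_colIndicator_le {S : Fin n → Finset (Fin n)} {s : ℕ} (hS : ∀ j, (S j).card ≤ s) :
    mnorm1 (colIndicator S) ≤ s := by
  refine Real.iSup_le (fun j => ?_) s.cast_nonneg
  simpa [colNorm1, colIndicator, apply_ite abs] using hS j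

theorem colNorm1_colIndicator_sub (S T : Fin n → Finset (Fin n)) (j : Fin n) :
    colNorm1 (colIndicator S - colIndicator T) j + 2 * (S j ∩ T j).card =
      (S j).card + (T j).card := by
  have hcard (A : Finset (Fin n)) : (A.card : ℝ) = ∑ i, if i ∈ A then 1 else 0 := by simp
  rw [colNorm1, hcard, hcard, hcard, Finset.mul_sum, ← Finset.sum_add_distrib,
    ← Finset.sum_add_distrib]
  refine Finset.sum_congr rfl fun i _ => ?_
  by_cases hS : i ∈ S j <;> by_cases hT : i ∈ T j <;> norm_num [colIndicator, hS, hT]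

theorem le_mnorm1_colIndicator_sub {S T : Fin n → Finset (Fin n)} {s : ℕ} {j : Fin n}
    (hS : (S j).card = s) (hT : (T j).card = s) (hST : 2 * (S j ∩ T j).card ≤ s) :
    (s : ℝ) ≤ mnorm1 (colIndicator S - colIndicator T) := by
  have hST' : (2 * (S j ∩ T j).card : ℝ) ≤ s := by exact_mod_cast hST
  have hcol := colNorm1_colIndicator_sub S T j
  rw [hS, hT] at hcol
  linarith [colNorm1_le_mnorm1 (colIndicator S - colIndicator T) j]

theorem colSparse_colIndicator_sub {S T : Fin n → Finset (Fin n)} {s t : ℕ}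
    (hS : ∀ j, (S j).card ≤ s) (hT : ∀ j, (T j).card ≤ t) :
    ColSparse (s + t) (colIndicator S - colIndicator T) := by
  intro j
  have hsupp : (Finset.univ.filter fun i => (colIndicator S - colIndicator T) i j ≠ 0) ⊆
      S j ∪ T j := by
    intro i hi
    by_contra hmem
    rw [Finset.mem_union, not_or] at hmem
    exact (Finset.mem_filter.1 hi).2 (by simp [colIndicator, hmem])
  calc _ ≤ (S j ∪ T j).card := Finset.card_le_card hsupp
    _ ≤ (S j).card + (T j).card := Finset.card_union_le _ _
    _ ≤ s + t := add_le_add (hS j) (hT j)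

theorem card_pow_le_three_pow_finrank_range {s : ℕ} (hs : 0 < s)
    (Φ : Matrix (Fin n) (Fin n) ℝ →ₗ[ℝ] F)
    (hΦ : ∀ X, ColSparse (2 * s) X → ∀ Z, Φ Z = Φ X → mnorm1 X ≤ mnorm1 Z)
    {C : Finset (Finset (Fin n))} (hC : C ⊆ Finset.univ.powersetCard s)
    (hinter : (C : Set (Finset (Fin n))).Pairwise fun S T => 2 * (S ∩ T).card ≤ s) :
    C.card ^ n ≤ 3 ^ finrank ℝ (LinearMap.range Φ) := by
  let X : (Fin n → C) → Matrix (Fin n) (Fin n) ℝ := fun S => colIndicator fun j => S j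
  have hcard (S : Fin n → C) (j : Fin n) : (S j : Finset (Fin n)).card = s :=
    (Finset.mem_powersetCard.1 (hC (S j).2)).2
  have hsR : (0 : ℝ) < s := by exact_mod_cast hs
  have hsep : Pairwise fun S T => ∀ Z, Φ Z = Φ (X S - X T) → (s : ℝ) ≤ mnorm1 Z := by
    intro S T hST Z hZ
    obtain ⟨j, hj⟩ := Function.ne_iff.1 hST
    have hsparse : ColSparse (2 * s) (X S - X T) := by
      rw [two_mul]
      exact colSparse_colIndicator_sub (fun i => (hcard S i).le) fun i => (hcard T i).le
    calc (s : ℝ) ≤ mnorm1 (X S - X T) :=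
          le_mnorm1_colIndicator_sub (hcard S j) (hcard T j)
            (hinter (S j).2 (T j).2 (Subtype.coe_ne_coe.2 hj))
      _ ≤ mnorm1 Z := hΦ _ hsparse Z hZ
  have hpack := card_le_pow_finrank_range_of_separated Φ hsR.le hsR X
    (fun S => mnorm1_colIndicator_le fun j => (hcard S j).le) hsep
  rw [mul_div_cancel_right₀ _ hsR.ne', show (1 + 2 : ℝ) = 3 by norm_num, Fintype.card_fun,
    Fintype.card_fin, Fintype.card_coe] at hpack
  exact_mod_cast hpack

theorem necessary_number_of_measurements_general {s : ℕ} (hs : 0 < s)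
    (Φ : Matrix (Fin n) (Fin n) ℝ →ₗ[ℝ] F)
    (hΦ : ∀ X, ColSparse (2 * s) X → ∀ Z, Φ Z = Φ X → mnorm1 X ≤ mnorm1 Z) :
    1 / (2 * Real.log 3) * n * s * Real.log (1 / 4 * n / s) ≤ finrank ℝ (LinearMap.range Φ) := by
  set r := finrank ℝ (LinearMap.range Φ)
  have hsR : (0 : ℝ) < s := by exact_mod_cast hs
  rcases lt_or_ge n s with hns | hsn
  · have hratio : (1 / 4 * n / s : ℝ) ≤ 1 := by
      rw [div_le_one hsR]
      linarith [(by exact_mod_cast hns : (n : ℝ) < s), (n.cast_nonneg : (0 : ℝ) ≤ n)]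
    exact (mul_nonpos_of_nonneg_of_nonpos (by positivity)
      (Real.log_nonpos (by positivity) hratio)).trans r.cast_nonneg
  have hnR : (0 : ℝ) < n := by exact_mod_cast hs.trans_le hsn
  obtain ⟨C, hC, hinter, hlarge⟩ := exists_subset_powersetCard_two_mul_card_inter_le
    (Finset.univ : Finset (Fin n)) hs (by simpa using hsn)
  rw [Finset.card_univ, Fintype.card_fin] at hlarge
  have hpack : (C.card : ℝ) ^ n ≤ 3 ^ r := by
    exact_mod_cast card_pow_le_three_pow_finrank_range hs Φ hΦ hC hinter
  have hpow : (1 / 4 * n / s : ℝ) ^ (n * s) ≤ 3 ^ (2 * r) := calc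
    (1 / 4 * n / s : ℝ) ^ (n * s) = ((1 / 4 * n / s) ^ s) ^ n := by rw [mul_comm n, pow_mul]
    _ ≤ ((C.card : ℝ) ^ 2) ^ n := by gcongr
    _ = ((C.card : ℝ) ^ n) ^ 2 := pow_right_comm _ _ _
    _ ≤ (3 ^ r) ^ 2 := by gcongr
    _ = 3 ^ (2 * r) := by rw [mul_comm, pow_mul]
  have hlog := Real.log_le_log (by positivity) hpow
  rw [Real.log_pow, Real.log_pow] at hlog
  push_cast at hlog
  calc 1 / (2 * Real.log 3) * n * s * Real.log (1 / 4 * n / s)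
      = n * s * Real.log (1 / 4 * n / s) / (2 * Real.log 3) := by ring
    _ ≤ r := by rw [div_le_iff₀ (by positivity)]; linarith

end Matrices

/-- necessary condition on the number of measurements (Theorem 5.3). -/
theorem necessary_number_of_measurements :
    ∃ C₁ C₂ : ℝ, 0 < C₁ ∧ 0 < C₂ ∧
      ∀ n m s : ℕ, 0 < s → s < n →
        ∀ Φ : Matrix (Fin n) (Fin n) ℝ →ₗ[ℝ] (Fin m → ℝ),
          (∀ X : Matrix (Fin n) (Fin n) ℝ, ColSparse (2 * s) X →
            ∀ Z : Matrix (Fin n) (Fin n) ℝ, Φ Z = Φ X → Z ≠ X → mnorm1 X < mnorm1 Z) →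
          (m : ℝ) ≥ C₁ * n * s * Real.log (C₂ * n / s) := by
  refine ⟨1 / (2 * Real.log 3), 1 / 4, by positivity, by norm_num, fun n m s hs _ Φ hΦ => ?_⟩
  have hmin : ∀ X, ColSparse (2 * s) X → ∀ Z, Φ Z = Φ X → mnorm1 X ≤ mnorm1 Z :=
    fun X hX Z hZ => (eq_or_ne Z X).elim (fun h => h ▸ le_rfl) fun h => (hΦ X hX Z hZ h).le
  have hrank : Module.finrank ℝ (LinearMap.range Φ) ≤ m := by
    simpa using Submodule.finrank_le (LinearMap.range Φ)
  exact (necessary_number_of_measurements_general hs Φ hmin).trans (by exact_mod_cast hrank)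

end
end

section
/- There is an absolute constant c > 0 such that the following holds. Let A, B be m×n random matrices with all entries i.i.d. standard Gaussian N(0,1), independent of each other, and let E = [ε_{kl}] be an m×m matrix of i.i.d. Rademacher random variables independent of A and B; set H := m^{−1}A^T E B. Let X = (x_1, …, x_n) ∈ ℝ^{n×n} have s-sparse columns and let r be the number of columns j with |x_j|₁ = max_k |x_k|₁. Then W²(Γ_X; Φ_{A,B}) := (E_H[sup{⟨H, U⟩ : U ∈ D(‖·‖₁, X), ‖U‖_F = 1}])² ≤ 1 + n² − r(n − s·log²(cn²r)). In particular, when r = n, W²(Γ_X; Φ_{A,B}) ≤ 1 + n·s·log²(cn³). -/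
/-!
The bound is weak duality for the descent cone. If `Y` pairs nonpositively with every descent
direction `U`, then `⟨H, U⟩ ≤ ⟨H - Y, U⟩ ≤ ‖H - Y‖_F` whenever `‖U‖_F = 1`, so `W² ≤ E ‖H - Y‖_F²`.
Take `Y = 0` in the columns whose `l₁`-norm is not maximal. In each of the `r` maximal columns, for
a deterministic level `λ`, put `λ sign(x_ij)` on the support of `X` and the entry `H_ij` clipped to
`[-λ, λ]` off the support; this is `λ` times a subgradient of the `l₁`-norm.

Entries of `H` have mean `0` and variance `1`, so the non-maximal columns contribute `n (n - r)`
and the supports at most `r s (1 + λ²)`. Off the supports only the excess `(|H_ij| - λ)₊²` remains,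
which is controlled by `E exp(± t H_ij) ≤ (1 - t²)^{-1/2}`, uniformly in `m`. With `t = 4/5`,
`λ = log(c n² r) - 1` and `c = e⁶`, the at most `n r` excess terms sum to at most `1` (using
`r ≤ n`), while `1 + λ² ≤ log²(c n² r)`.

For the exponential moment, condition on `E` and on the column `b` of `B`: the entry is then
Gaussian with variance `|m⁻¹ E b|²`. The coordinates of `m⁻¹ E b` are centred Gaussians whose
variances add up to `1`, and Jensen's inequality with these variances as weights removes the
dependence between them.
-/

open scoped BigOperators
open scoped Classical

noncomputable section

open MeasureTheory ProbabilityTheory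

/-- Law of an m×n random matrix (stored row-by-row) with i.i.d. N(0,1) entries. -/
def gaussVec (m n : ℕ) : Measure (Fin m → Fin n → ℝ) :=
  Measure.pi fun _ => Measure.pi fun _ => gaussianReal 0 1

/-- The Rademacher law on ℝ : P[ε = ±1] = 1/2. -/
def radMeasure : Measure ℝ :=
  (1/2 : ENNReal) • Measure.dirac (1 : ℝ) + (1/2 : ENNReal) • Measure.dirac (-1 : ℝ)

/-- Law of an m×m random matrix with i.i.d. Rademacher entries. -/
def radMat (m : ℕ) : Measure (Fin m → Fin m → ℝ) :=
  Measure.pi fun _ => Measure.pi fun _ => radMeasure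

/-- Joint law of the independent triple (A, B, E). -/
def tripleMeasure (m n : ℕ) :
    Measure ((Fin m → Fin n → ℝ) × ((Fin m → Fin n → ℝ) × (Fin m → Fin m → ℝ))) :=
  (gaussVec m n).prod ((gaussVec m n).prod (radMat m))

/-- The descent cone Γ_X = D(‖·‖₁, X). -/
def descCone {n : ℕ} (X : Matrix (Fin n) (Fin n) ℝ) : Set (Matrix (Fin n) (Fin n) ℝ) :=
  {V | ∃ t : ℝ, 0 < t ∧ mnorm1 (X + t • V) ≤ mnorm1 X}

/-- W(Γ_X; Φ_{A,B}) = E_H[sup{⟨H,U⟩ : U ∈ Γ_X, ‖U‖_F = 1}], where H = m⁻¹AᵀEB,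
i.e. H i j = m⁻¹ Σ_{k,l} A_{ki} E_{kl} B_{lj}. -/
def Wwidth {n : ℕ} (m : ℕ) (X : Matrix (Fin n) (Fin n) ℝ) : ℝ :=
  ∫ ω, sSup {c : ℝ | ∃ U ∈ descCone X, frob U = 1 ∧
      c = minner (Matrix.of fun i j =>
            (m : ℝ)⁻¹ * ∑ k, ∑ l, ω.1 k i * ω.2.2 k l * ω.2.1 l j) U}
    ∂(tripleMeasure m n)

section SupportFunction

variable {Ω V : Type*} [NormedAddCommGroup V] [InnerProductSpace ℝ V] {T : Set V}

/-- The support function `h ↦ sup {⟪h, u⟫ : u ∈ T}` of a set `T`. It is used for bounded `T`; the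
supremum over the empty set is `0`. -/
def supportFun (T : Set V) (h : V) : ℝ := sSup ((fun u => inner ℝ h u) '' T)

lemma inner_le_supportFun (hT : ∀ u ∈ T, ‖u‖ ≤ 1) (h : V) {u : V} (hu : u ∈ T) :
    inner ℝ h u ≤ supportFun T h := by
  refine le_csSup ⟨‖h‖, ?_⟩ ⟨u, hu, rfl⟩
  rintro _ ⟨v, hv, rfl⟩
  exact (real_inner_le_norm h v).trans (mul_le_of_le_one_right (norm_nonneg h) (hT v hv))

lemma lipschitzWith_supportFun (hT : ∀ u ∈ T, ‖u‖ ≤ 1) : LipschitzWith 1 (supportFun T) := by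
  rcases T.eq_empty_or_nonempty with rfl | hne
  · have hzero : supportFun (∅ : Set V) = fun _ => 0 := by ext; simp [supportFun]
    exact hzero ▸ LipschitzWith.const' 0
  refine LipschitzWith.of_le_add fun h h' => csSup_le (hne.image _) ?_
  rintro _ ⟨u, hu, rfl⟩
  calc inner ℝ h u = inner ℝ h' u + inner ℝ (h - h') u := by rw [← inner_add_left]; congr 1; abel
    _ ≤ supportFun T h' + ‖h - h'‖ * ‖u‖ :=
        add_le_add (inner_le_supportFun hT h' hu) (real_inner_le_norm _ _)
    _ ≤ supportFun T h' + dist h h' := by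
        rw [dist_eq_norm]
        gcongr
        exact mul_le_of_le_one_right (norm_nonneg _) (hT u hu)

lemma supportFun_zero (T : Set V) : supportFun T 0 = 0 := by
  rcases T.eq_empty_or_nonempty with rfl | hne <;> simp [supportFun, *]

lemma supportFun_le_norm_sub (hT : ∀ u ∈ T, ‖u‖ ≤ 1) (h : V) {y : V}
    (hy : ∀ u ∈ T, inner ℝ y u ≤ 0) : supportFun T h ≤ ‖h - y‖ := by
  have hy_nonpos : supportFun T y ≤ 0 := Real.sSup_nonpos (Set.forall_mem_image.2 hy)
  have hlip := (le_abs_self _).trans ((lipschitzWith_supportFun hT).dist_le_mul h y)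
  rw [NNReal.coe_one, one_mul, dist_eq_norm] at hlip
  linarith

variable [MeasurableSpace Ω] {μ : Measure Ω}

lemma integrable_supportFun_comp (hT : ∀ u ∈ T, ‖u‖ ≤ 1) {H : Ω → V} (hH : Integrable H μ) :
    Integrable (fun ω => supportFun T (H ω)) μ := by
  have hlip := lipschitzWith_supportFun hT
  refine hH.mono (hlip.continuous.comp_aestronglyMeasurable hH.aestronglyMeasurable)
    (ae_of_all _ fun ω => ?_)
  simpa [supportFun_zero] using hlip.dist_le_mul (H ω) 0

lemma integral_supportFun_nonneg [CompleteSpace V] (hT : ∀ u ∈ T, ‖u‖ ≤ 1) {H : Ω → V}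
    (hH : Integrable H μ) (hmean : ∫ ω, H ω ∂μ = 0) : 0 ≤ ∫ ω, supportFun T (H ω) ∂μ := by
  rcases T.eq_empty_or_nonempty with rfl | ⟨u, hu⟩
  · simp [supportFun]
  calc (0 : ℝ) = ∫ ω, inner ℝ (H ω) u ∂μ := by
        simp_rw [real_inner_comm u, integral_inner hH, hmean, inner_zero_right]
    _ ≤ ∫ ω, supportFun T (H ω) ∂μ :=
        integral_mono (hH.inner_const u) (integrable_supportFun_comp hT hH)
          fun ω => inner_le_supportFun hT (H ω) hu

lemma sq_integral_le_integral_sq [IsProbabilityMeasure μ] {f : Ω → ℝ} (hf : MemLp f 2 μ) :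
    (∫ ω, f ω ∂μ) ^ 2 ≤ ∫ ω, f ω ^ 2 ∂μ := by
  have hvar := variance_eq_sub hf ▸ variance_nonneg f μ
  simpa using hvar

lemma sq_integral_supportFun_le [IsProbabilityMeasure μ] [CompleteSpace V]
    (hT : ∀ u ∈ T, ‖u‖ ≤ 1) {H Y : Ω → V} (hH : Integrable H μ) (hmean : ∫ ω, H ω ∂μ = 0)
    (hHY : MemLp (fun ω => H ω - Y ω) 2 μ) (hY : ∀ ω, ∀ u ∈ T, inner ℝ (Y ω) u ≤ 0) :
    (∫ ω, supportFun T (H ω) ∂μ) ^ 2 ≤ ∫ ω, ‖H ω - Y ω‖ ^ 2 ∂μ :=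
  calc (∫ ω, supportFun T (H ω) ∂μ) ^ 2 ≤ (∫ ω, ‖H ω - Y ω‖ ∂μ) ^ 2 := by
        refine pow_le_pow_left₀ (integral_supportFun_nonneg hT hH hmean) ?_ 2
        exact integral_mono (integrable_supportFun_comp hT hH) (hHY.integrable one_le_two).norm
          fun ω => supportFun_le_norm_sub hT (H ω) (hY ω)
    _ ≤ ∫ ω, ‖H ω - Y ω‖ ^ 2 ∂μ := sq_integral_le_integral_sq hHY.norm

end SupportFunction

section Gaussian

open Matrix

variable {ι κ : Type*} [Fintype κ]

/-- The law of a standard Gaussian vector, as a measure on `κ → ℝ`. -/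
abbrev gaussPi (κ : Type*) [Fintype κ] : Measure (κ → ℝ) := Measure.pi fun _ => gaussianReal 0 1

lemma map_dotProduct_gaussPi (w : κ → ℝ) :
    (gaussPi κ).map (fun a => a ⬝ᵥ w) = gaussianReal 0 (∑ k, w k ^ 2).toNNReal := by
  let L : StrongDual ℝ (EuclideanSpace ℝ κ) := innerSL ℝ (WithLp.toLp 2 w)
  have hL : (fun a : κ → ℝ => a ⬝ᵥ w) = L ∘ WithLp.toLp 2 := by
    ext a
    simp [L, EuclideanSpace.inner_eq_star_dotProduct]
  rw [hL, ← Measure.map_map (by fun_prop) (by fun_prop), map_pi_eq_stdGaussian,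
    IsGaussian.map_eq_gaussianReal, integral_strongDual_stdGaussian, variance_dual_stdGaussian,
    innerSL_apply_norm, EuclideanSpace.real_norm_sq_eq]

lemma lintegral_sq_gaussianReal (v : NNReal) :
    ∫⁻ x, ENNReal.ofReal (x ^ 2) ∂(gaussianReal 0 v) = v := by
  have hint : Integrable (fun x : ℝ => x ^ 2) (gaussianReal 0 v) :=
    (memLp_id_gaussianReal 2).integrable_sq
  have hvar := variance_fun_id_gaussianReal (μ := 0) (v := v)
  rw [variance_of_integral_eq_zero (by fun_prop) integral_id_gaussianReal] at hvar
  rw [← ofReal_integral_eq_lintegral_ofReal hint (ae_of_all _ fun x => sq_nonneg x), hvar,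
    ENNReal.ofReal_coe_nnreal]

lemma lintegral_exp_mul_gaussianReal (v : NNReal) (t : ℝ) :
    ∫⁻ x, ENNReal.ofReal (Real.exp (t * x)) ∂(gaussianReal 0 v)
      = ENNReal.ofReal (Real.exp (v * t ^ 2 / 2)) := by
  rw [← ofReal_integral_eq_lintegral_ofReal (integrable_exp_mul_gaussianReal t)
    (ae_of_all _ fun x => (Real.exp_pos _).le)]
  simpa [mgf] using congrArg ENNReal.ofReal
    (congrFun (mgf_fun_id_gaussianReal (μ := 0) (v := v)) t)

lemma lintegral_exp_mul_sq_div_gaussianReal_le (v : NNReal) {s : ℝ} (hs₀ : 0 ≤ s) (hs₁ : s < 1) :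
    ∫⁻ x, ENNReal.ofReal (Real.exp (s / 2 * (x ^ 2 / v))) ∂(gaussianReal 0 v)
      ≤ ENNReal.ofReal (√(1 - s))⁻¹ := by
  have hs : 0 < 1 - s := sub_pos.2 hs₁
  rcases eq_or_ne v 0 with rfl | hv
  · simpa using (one_le_inv₀ (Real.sqrt_pos.2 hs)).2 (Real.sqrt_le_one.2 (by linarith))
  have hb : 0 < (1 - s) / (2 * v) := by positivity
  have hdensity : ∀ x : ℝ,
      (gaussianPDF 0 v * fun x => ENNReal.ofReal (Real.exp (s / 2 * (x ^ 2 / v)))) x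
        = ENNReal.ofReal ((√(2 * Real.pi * v))⁻¹ * Real.exp (-((1 - s) / (2 * v)) * x ^ 2)) := by
    intro x
    simp only [Pi.mul_apply, gaussianPDF, gaussianPDFReal]
    rw [← ENNReal.ofReal_mul (by positivity), mul_assoc, ← Real.exp_add]
    congr 3
    field_simp
    ring
  rw [gaussianReal_of_var_ne_zero _ hv,
    lintegral_withDensity_eq_lintegral_mul _ (measurable_gaussianPDF 0 v) (by fun_prop)]
  simp_rw [hdensity]
  rw [← ofReal_integral_eq_lintegral_ofReal ((integrable_exp_neg_mul_sq hb).const_mul _)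
    (ae_of_all _ fun x => by positivity), integral_const_mul, integral_gaussian,
    ← Real.sqrt_inv, ← Real.sqrt_inv, ← Real.sqrt_mul (by positivity)]
  refine (congrArg (fun y => ENNReal.ofReal √y) ?_).le
  field_simp

/-- Jensen's inequality in the form used to decouple dependent `y k` of different scales `q k`. -/
lemma exp_mul_sum_le_sum_mul_exp_div {q y : κ → ℝ} (hq : ∀ k, 0 ≤ q k) (hq_sum : ∑ k, q k = 1)
    (hy : ∀ k, q k = 0 → y k = 0) (c : ℝ) :
    Real.exp (c * ∑ k, y k) ≤ ∑ k, q k * Real.exp (c * (y k / q k)) := by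
  have hjensen := convexOn_exp.map_sum_le (t := Finset.univ) (w := q)
    (p := fun k => c * (y k / q k)) (fun k _ => hq k) hq_sum fun k _ => Set.mem_univ _
  simp only [smul_eq_mul] at hjensen
  refine (congrArg Real.exp ?_).trans_le hjensen
  rw [Finset.mul_sum]
  refine Finset.sum_congr rfl fun k _ => ?_
  rw [mul_left_comm, mul_div_cancel_of_imp' (hy k)]

lemma measurable_mulVec_apply (M : Matrix ι κ ℝ) (k : ι) : Measurable fun b => (M *ᵥ b) k := by
  simp only [mulVec, dotProduct]
  fun_prop

lemma mulVec_apply_eq_zero_of_sum_sq_eq_zero {M : Matrix ι κ ℝ} {k : ι}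
    (hM : ∑ l, M k l ^ 2 = 0) (b : κ → ℝ) : (M *ᵥ b) k = 0 := by
  have hrow : ∀ l, M k l = 0 := by
    simpa [Finset.sum_eq_zero_iff_of_nonneg fun l _ => sq_nonneg (M k l)] using hM
  simp [mulVec, dotProduct, hrow]

lemma map_mulVec_gaussPi (M : Matrix ι κ ℝ) (k : ι) :
    (gaussPi κ).map (fun b => (M *ᵥ b) k) = gaussianReal 0 (∑ l, M k l ^ 2).toNNReal := by
  simp_rw [mulVec, dotProduct_comm (M k)]
  exact map_dotProduct_gaussPi _

variable [Fintype ι]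

/-- Conditionally on `b`, the Gaussian bilinear form `aᵀ M b` is centred with variance `|M b|²`. -/
lemma lintegral_dotProduct_mulVec_gaussPi (M : Matrix ι κ ℝ) {F : ℝ → ENNReal}
    (hF : Measurable F) :
    ∫⁻ p, F (p.1 ⬝ᵥ M *ᵥ p.2) ∂((gaussPi ι).prod (gaussPi κ))
      = ∫⁻ b, ∫⁻ x, F x ∂(gaussianReal 0 (∑ k, (M *ᵥ b) k ^ 2).toNNReal) ∂(gaussPi κ) := by
  have hmeas : Measurable fun p : (ι → ℝ) × (κ → ℝ) => p.1 ⬝ᵥ M *ᵥ p.2 := by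
    simp only [dotProduct, mulVec]
    fun_prop
  rw [lintegral_prod_symm' (fun p : (ι → ℝ) × (κ → ℝ) => F (p.1 ⬝ᵥ M *ᵥ p.2)) (hF.comp hmeas)]
  refine lintegral_congr fun b => ?_
  rw [← map_dotProduct_gaussPi, lintegral_map hF (by simp only [dotProduct]; fun_prop)]

lemma lintegral_sq_dotProduct_mulVec_gaussPi (M : Matrix ι κ ℝ) :
    ∫⁻ p, ENNReal.ofReal ((p.1 ⬝ᵥ M *ᵥ p.2) ^ 2) ∂((gaussPi ι).prod (gaussPi κ))
      = ENNReal.ofReal (∑ k, ∑ l, M k l ^ 2) := by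
  rw [lintegral_dotProduct_mulVec_gaussPi M (F := fun x => ENNReal.ofReal (x ^ 2)) (by fun_prop)]
  simp_rw [lintegral_sq_gaussianReal]
  calc ∫⁻ b, ENNReal.ofReal (∑ k, (M *ᵥ b) k ^ 2) ∂(gaussPi κ)
      = ∑ k, ∫⁻ b, ENNReal.ofReal ((M *ᵥ b) k ^ 2) ∂(gaussPi κ) := by
        simp_rw [ENNReal.ofReal_sum_of_nonneg fun _ _ => sq_nonneg _]
        exact lintegral_finsetSum _ fun k _ =>
          ((measurable_mulVec_apply M k).pow_const 2).ennreal_ofReal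
    _ = ∑ k, ENNReal.ofReal (∑ l, M k l ^ 2) := by
        refine Finset.sum_congr rfl fun k _ => ?_
        rw [← lintegral_map (f := fun x => ENNReal.ofReal (x ^ 2)) (by fun_prop)
            (measurable_mulVec_apply M k), map_mulVec_gaussPi, lintegral_sq_gaussianReal]
        rfl
    _ = ENNReal.ofReal (∑ k, ∑ l, M k l ^ 2) :=
        (ENNReal.ofReal_sum_of_nonneg fun k _ => Finset.sum_nonneg fun l _ => sq_nonneg _).symm

lemma lintegral_exp_dotProduct_mulVec_gaussPi_le {M : Matrix ι κ ℝ}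
    (hM : ∑ k, ∑ l, M k l ^ 2 = 1) {t : ℝ} (ht : t ^ 2 < 1) :
    ∫⁻ p, ENNReal.ofReal (Real.exp (t * (p.1 ⬝ᵥ M *ᵥ p.2))) ∂((gaussPi ι).prod (gaussPi κ))
      ≤ ENNReal.ofReal (√(1 - t ^ 2))⁻¹ := by
  set q : ι → ℝ := fun k => ∑ l, M k l ^ 2
  have hq_nonneg : ∀ k, 0 ≤ q k := fun k => Finset.sum_nonneg fun l _ => sq_nonneg _
  have hzero : ∀ k b, q k = 0 → (M *ᵥ b) k ^ 2 = 0 := fun _ b hk => by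
    simp [mulVec_apply_eq_zero_of_sum_sq_eq_zero hk b]
  rw [lintegral_dotProduct_mulVec_gaussPi M (F := fun x => ENNReal.ofReal (Real.exp (t * x)))
    (by fun_prop)]
  simp_rw [lintegral_exp_mul_gaussianReal]
  calc ∫⁻ b, ENNReal.ofReal
          (Real.exp ((∑ k, (M *ᵥ b) k ^ 2).toNNReal * t ^ 2 / 2)) ∂(gaussPi κ)
      ≤ ∫⁻ b, ∑ k, ENNReal.ofReal (q k)
          * ENNReal.ofReal (Real.exp (t ^ 2 / 2 * ((M *ᵥ b) k ^ 2 / q k))) ∂(gaussPi κ) := by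
        refine lintegral_mono fun b => ?_
        simp_rw [← ENNReal.ofReal_mul (hq_nonneg _)]
        rw [← ENNReal.ofReal_sum_of_nonneg fun k _ => mul_nonneg (hq_nonneg k) (Real.exp_pos _).le,
          Real.coe_toNNReal _ (Finset.sum_nonneg fun k _ => sq_nonneg _), mul_div_assoc, mul_comm]
        exact ENNReal.ofReal_le_ofReal
          (exp_mul_sum_le_sum_mul_exp_div hq_nonneg hM (fun k => hzero k b) _)
    _ = ∑ k, ENNReal.ofReal (q k) * ∫⁻ x, ENNReal.ofReal
          (Real.exp (t ^ 2 / 2 * (x ^ 2 / (q k).toNNReal))) ∂(gaussianReal 0 (q k).toNNReal) := by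
        rw [lintegral_finsetSum _ fun k _ => by have := measurable_mulVec_apply M k; fun_prop]
        refine Finset.sum_congr rfl fun k _ => ?_
        rw [lintegral_const_mul _ (by have := measurable_mulVec_apply M k; fun_prop),
          ← map_mulVec_gaussPi M k, lintegral_map (by fun_prop) (measurable_mulVec_apply M k),
          Real.coe_toNNReal _ (hq_nonneg k)]
    _ ≤ ∑ k, ENNReal.ofReal (q k) * ENNReal.ofReal (√(1 - t ^ 2))⁻¹ := by
        gcongr with k
        exact lintegral_exp_mul_sq_div_gaussianReal_le _ (sq_nonneg t) ht
    _ = ENNReal.ofReal (√(1 - t ^ 2))⁻¹ := by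
        rw [← Finset.sum_mul, ← ENNReal.ofReal_sum_of_nonneg fun k _ => hq_nonneg k, hM,
          ENNReal.ofReal_one, one_mul]

end Gaussian

section Sample

open Matrix

variable {m n : ℕ}

/-- The sample space of the triple `(A, B, E)`. -/
abbrev Sample (m n : ℕ) := (Fin m → Fin n → ℝ) × ((Fin m → Fin n → ℝ) × (Fin m → Fin m → ℝ))

/-- The matrix `H = m⁻¹ Aᵀ E B`, which is `m⁻¹` times the adjoint of `Φ_{A,B}` applied to `E`. -/
def adjointSample (ω : Sample m n) : Matrix (Fin n) (Fin n) ℝ :=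
  Matrix.of fun i j => (m : ℝ)⁻¹ * ∑ k, ∑ l, ω.1 k i * ω.2.2 k l * ω.2.1 l j

instance : IsProbabilityMeasure radMeasure :=
  ⟨by simp [radMeasure, ENNReal.inv_two_add_inv_two]⟩

instance : IsProbabilityMeasure (radMat m) := by unfold radMat; infer_instance

instance : IsProbabilityMeasure (gaussVec m n) := by unfold gaussVec; infer_instance

instance : IsProbabilityMeasure (tripleMeasure m n) := by unfold tripleMeasure; infer_instance

lemma ae_radMeasure_sq_eq_one : ∀ᵐ x ∂radMeasure, x ^ 2 = 1 := by
  refine ae_add_measure_iff.2 ⟨Measure.ae_smul_measure ?_ _, Measure.ae_smul_measure ?_ _⟩ <;>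
    simp

lemma ae_radMat_sq_eq_one (m : ℕ) : ∀ᵐ e ∂(radMat m), ∀ k l, e k l ^ 2 = 1 := by
  refine ae_all_iff.2 fun k => ae_all_iff.2 fun l => ?_
  exact (Measure.quasiMeasurePreserving_eval
    (fun _ : Fin m => Measure.pi fun _ : Fin m => radMeasure) k).ae
      ((Measure.quasiMeasurePreserving_eval (fun _ : Fin m => radMeasure) l).ae
        ae_radMeasure_sq_eq_one)

lemma ae_radMat_sum_sq_eq_one (hm : 0 < m) :
    ∀ᵐ e ∂(radMat m), ∑ k, ∑ l, ((m : ℝ)⁻¹ • of e) k l ^ 2 = 1 := by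
  filter_upwards [ae_radMat_sq_eq_one m] with e he
  simp only [Matrix.smul_apply, of_apply, smul_eq_mul, mul_pow, inv_pow, he, mul_one,
    Finset.sum_const, Finset.card_univ, Fintype.card_fin, nsmul_eq_mul]
  field_simp

lemma measurePreserving_col_gaussVec (i : Fin n) :
    MeasurePreserving (fun (a : Fin m → Fin n → ℝ) k => a k i) (gaussVec m n) (gaussPi (Fin m)) :=
  measurePreserving_pi _ _ fun _ => measurePreserving_eval (fun _ : Fin n => gaussianReal 0 1) i

lemma adjointSample_apply (ω : Sample m n) (i j : Fin n) :
    adjointSample ω i j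
      = (fun k => ω.1 k i) ⬝ᵥ ((m : ℝ)⁻¹ • of ω.2.2) *ᵥ fun l => ω.2.1 l j := by
  simp only [adjointSample, of_apply, smul_mulVec, dotProduct_smul, smul_eq_mul]
  simp only [dotProduct, mulVec, of_apply, Finset.mul_sum, mul_assoc]

lemma measurable_adjointSample_apply (i j : Fin n) :
    Measurable fun ω : Sample m n => adjointSample ω i j := by
  simp only [adjointSample, of_apply]
  fun_prop

lemma lintegral_adjointSample_apply (i j : Fin n) {F : ℝ → ENNReal} (hF : Measurable F) :
    ∫⁻ ω, F (adjointSample ω i j) ∂(tripleMeasure m n)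
      = ∫⁻ e, ∫⁻ p, F (p.1 ⬝ᵥ ((m : ℝ)⁻¹ • of e) *ᵥ p.2)
          ∂((gaussPi (Fin m)).prod (gaussPi (Fin m))) ∂(radMat m) := by
  let G : (Fin m → ℝ) × ((Fin m → ℝ) × (Fin m → Fin m → ℝ)) → ENNReal :=
    fun p => F (p.1 ⬝ᵥ ((m : ℝ)⁻¹ • of p.2.2) *ᵥ p.2.1)
  have hG : Measurable G := by
    simp only [G, dotProduct, mulVec, Matrix.smul_apply, of_apply, smul_eq_mul]
    fun_prop
  have hcols := (measurePreserving_col_gaussVec (m := m) i).prod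
    ((measurePreserving_col_gaussVec (m := m) j).prod (MeasurePreserving.id (radMat m)))
  calc ∫⁻ ω, F (adjointSample ω i j) ∂(tripleMeasure m n)
      = ∫⁻ p, G p ∂((gaussPi (Fin m)).prod ((gaussPi (Fin m)).prod (radMat m))) := by
        rw [← hcols.lintegral_comp hG]
        exact lintegral_congr fun ω => congrArg F (adjointSample_apply ω i j)
    _ = ∫⁻ p, G (MeasurableEquiv.prodAssoc p)
          ∂(((gaussPi (Fin m)).prod (gaussPi (Fin m))).prod (radMat m)) := by
        rw [← Measure.prodAssoc_prod, lintegral_map_equiv]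
    _ = ∫⁻ e, ∫⁻ p, G (MeasurableEquiv.prodAssoc (p, e))
          ∂((gaussPi (Fin m)).prod (gaussPi (Fin m))) ∂(radMat m) :=
        lintegral_prod_symm' _ (hG.comp MeasurableEquiv.prodAssoc.measurable)

lemma lintegral_sq_adjointSample_apply (hm : 0 < m) (i j : Fin n) :
    ∫⁻ ω, ENNReal.ofReal (adjointSample ω i j ^ 2) ∂(tripleMeasure m n) = 1 := by
  rw [lintegral_adjointSample_apply i j (F := fun x => ENNReal.ofReal (x ^ 2)) (by fun_prop)]
  simp_rw [lintegral_sq_dotProduct_mulVec_gaussPi]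
  refine (lintegral_congr_ae ?_).trans (lintegral_one.trans measure_univ)
  filter_upwards [ae_radMat_sum_sq_eq_one hm] with e he
  rw [he, ENNReal.ofReal_one]

lemma lintegral_exp_adjointSample_apply_le (hm : 0 < m) (i j : Fin n) {t : ℝ} (ht : t ^ 2 < 1) :
    ∫⁻ ω, ENNReal.ofReal (Real.exp (t * adjointSample ω i j)) ∂(tripleMeasure m n)
      ≤ ENNReal.ofReal (√(1 - t ^ 2))⁻¹ := by
  rw [lintegral_adjointSample_apply i j (F := fun x => ENNReal.ofReal (Real.exp (t * x)))
    (by fun_prop)]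
  refine (lintegral_mono_ae (g := fun _ => ENNReal.ofReal (√(1 - t ^ 2))⁻¹) ?_).trans (by simp)
  filter_upwards [ae_radMat_sum_sq_eq_one hm] with e he
  exact lintegral_exp_dotProduct_mulVec_gaussPi_le he ht

lemma memLp_two_adjointSample_apply (hm : 0 < m) (i j : Fin n) :
    MemLp (fun ω => adjointSample ω i j) 2 (tripleMeasure m n) := by
  have hmeas := measurable_adjointSample_apply (m := m) i j
  refine (memLp_two_iff_integrable_sq hmeas.aestronglyMeasurable).2 ⟨by fun_prop, ?_⟩
  rw [hasFiniteIntegral_iff_ofReal (ae_of_all _ fun ω => sq_nonneg _),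
    lintegral_sq_adjointSample_apply hm]
  exact ENNReal.one_lt_top

lemma integral_sq_adjointSample_apply (hm : 0 < m) (i j : Fin n) :
    ∫ ω, adjointSample ω i j ^ 2 ∂(tripleMeasure m n) = 1 := by
  have hmeas := measurable_adjointSample_apply (m := m) i j
  rw [integral_eq_lintegral_of_nonneg_ae (ae_of_all _ fun ω => sq_nonneg _) (by fun_prop),
    lintegral_sq_adjointSample_apply hm, ENNReal.toReal_one]

lemma measurePreserving_neg_gaussVec :
    MeasurePreserving (MeasurableEquiv.neg (Fin m → Fin n → ℝ)) (gaussVec m n) (gaussVec m n) := by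
  have hneg : MeasurePreserving (fun x : ℝ => -x) (gaussianReal 0 1) (gaussianReal 0 1) :=
    ⟨measurable_neg, by rw [gaussianReal_map_neg, neg_zero]⟩
  exact measurePreserving_pi _ _ fun _ => measurePreserving_pi _ _ fun _ => hneg

lemma integral_adjointSample_apply (i j : Fin n) :
    ∫ ω, adjointSample ω i j ∂(tripleMeasure m n) = 0 := by
  let flip := (MeasurableEquiv.neg (Fin m → Fin n → ℝ)).prodCongr
    (.refl ((Fin m → Fin n → ℝ) × (Fin m → Fin m → ℝ)))
  have hflip : MeasurePreserving flip (tripleMeasure m n) (tripleMeasure m n) :=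
    measurePreserving_neg_gaussVec.prod (.id _)
  have hodd : ∀ ω : Sample m n, adjointSample (flip ω) i j = -adjointSample ω i j := fun ω => by
    have hflip_apply : flip ω = (-ω.1, ω.2) := rfl
    simp [adjointSample, hflip_apply]
  have hsymm := hflip.integral_comp' fun ω => adjointSample ω i j
  simp_rw [hodd, integral_neg] at hsymm
  linarith

lemma integrable_exp_mul_adjointSample_apply (hm : 0 < m) (i j : Fin n) {t : ℝ} (ht : t ^ 2 < 1) :
    Integrable (fun ω => Real.exp (t * adjointSample ω i j)) (tripleMeasure m n) := by
  have hmeas := measurable_adjointSample_apply (m := m) i j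
  refine ⟨by fun_prop, ?_⟩
  rw [hasFiniteIntegral_iff_ofReal (ae_of_all _ fun ω => (Real.exp_pos _).le)]
  exact (lintegral_exp_adjointSample_apply_le hm i j ht).trans_lt ENNReal.ofReal_lt_top

lemma mgf_adjointSample_apply_le (hm : 0 < m) (i j : Fin n) {t : ℝ} (ht : t ^ 2 < 1) :
    mgf (fun ω => adjointSample ω i j) (tripleMeasure m n) t ≤ (√(1 - t ^ 2))⁻¹ := by
  have hmeas := measurable_adjointSample_apply (m := m) i j
  rw [mgf, integral_eq_lintegral_of_nonneg_ae (ae_of_all _ fun ω => (Real.exp_pos _).le)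
    (by fun_prop)]
  exact ENNReal.toReal_le_of_le_ofReal (by positivity)
    (lintegral_exp_adjointSample_apply_le hm i j ht)

end Sample

section SoftThreshold

/-- The metric projection of `h` onto the interval `[-lam, lam]`, for `0 ≤ lam`. -/
def clip (lam h : ℝ) : ℝ := max (-lam) (min lam h)

lemma measurable_clip (lam : ℝ) : Measurable (clip lam) := by
  unfold clip
  fun_prop

lemma abs_clip_le {lam : ℝ} (hlam : 0 ≤ lam) (h : ℝ) : |clip lam h| ≤ lam :=
  abs_le.2 ⟨le_max_left _ _, max_le (by linarith) (min_le_left _ _)⟩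

lemma abs_sub_clip {lam : ℝ} (hlam : 0 ≤ lam) (h : ℝ) : |h - clip lam h| = max (|h| - lam) 0 := by
  unfold clip
  grind

lemma sq_sub_clip_le {lam t : ℝ} (hlam : 0 ≤ lam) (ht : 0 < t) (h : ℝ) :
    (h - clip lam h) ^ 2
      ≤ 2 / t ^ 2 * Real.exp (-(t * lam)) * (Real.exp (t * h) + Real.exp (-t * h)) := by
  rw [← sq_abs, abs_sub_clip hlam]
  rcases le_total |h| lam with hle | hle
  · rw [max_eq_right (sub_nonpos.2 hle), zero_pow two_ne_zero]
    positivity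
  · rw [max_eq_left (sub_nonneg.2 hle)]
    have hquad := Real.quadratic_le_exp_of_nonneg (mul_nonneg ht.le (sub_nonneg.2 hle))
    calc (|h| - lam) ^ 2 = 2 / t ^ 2 * ((t * (|h| - lam)) ^ 2 / 2) := by field_simp
      _ ≤ 2 / t ^ 2 * Real.exp (t * (|h| - lam)) := by
          gcongr
          linarith [mul_nonneg ht.le (sub_nonneg.2 hle)]
      _ = 2 / t ^ 2 * Real.exp (-(t * lam)) * Real.exp |t * h| := by
          rw [abs_mul, abs_of_pos ht, mul_assoc, ← Real.exp_add]
          ring_nf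
      _ ≤ 2 / t ^ 2 * Real.exp (-(t * lam)) * (Real.exp (t * h) + Real.exp (-t * h)) := by
          rw [neg_mul]
          gcongr
          exact Real.exp_abs_le _

variable {Ω : Type*} [MeasurableSpace Ω] {μ : Measure Ω} {Z : Ω → ℝ}

lemma integral_sq_sub_clip_le {lam t : ℝ} (hlam : 0 ≤ lam) (ht : 0 < t)
    (hpos : Integrable (fun ω => Real.exp (t * Z ω)) μ)
    (hneg : Integrable (fun ω => Real.exp (-t * Z ω)) μ) :
    ∫ ω, (Z ω - clip lam (Z ω)) ^ 2 ∂μ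
      ≤ 2 / t ^ 2 * Real.exp (-(t * lam)) * (mgf Z μ t + mgf Z μ (-t)) := by
  rw [mgf, mgf, ← integral_add hpos hneg, ← integral_const_mul]
  exact integral_mono_of_nonneg (ae_of_all _ fun ω => sq_nonneg _)
    ((hpos.add hneg).const_mul _) (ae_of_all _ fun ω => sq_sub_clip_le hlam ht (Z ω))

lemma integral_sq_sub_const [IsProbabilityMeasure μ] (hZ : MemLp Z 2 μ)
    (hmean : ∫ ω, Z ω ∂μ = 0) (c : ℝ) : ∫ ω, (Z ω - c) ^ 2 ∂μ = ∫ ω, Z ω ^ 2 ∂μ + c ^ 2 := by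
  have hcross : Integrable (fun ω => 2 * Z ω * c) μ :=
    ((hZ.integrable one_le_two).const_mul 2).mul_const c
  simp_rw [sub_sq]
  rw [integral_add (hZ.integrable_sq.sub' hcross) (integrable_const _),
    integral_sub hZ.integrable_sq hcross, integral_mul_const, integral_const_mul, hmean]
  simp

end SoftThreshold

section Certificate

lemma sum_mul_nonpos_of_sum_abs_add_le {κ : Type*} [Fintype κ] {x y v : κ → ℝ} {lam t : ℝ}
    (hlam : 0 ≤ lam) (hy : ∀ i, |y i| ≤ lam) (hyx : ∀ i, y i * x i = lam * |x i|) (ht : 0 < t)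
    (hle : ∑ i, |x i + t * v i| ≤ ∑ i, |x i|) : ∑ i, y i * v i ≤ 0 := by
  have hsubgrad : ∀ i, lam * |x i| + t * (y i * v i) ≤ lam * |x i + t * v i| := fun i =>
    calc lam * |x i| + t * (y i * v i) = y i * (x i + t * v i) := by rw [← hyx]; ring
      _ ≤ |y i| * |x i + t * v i| := (le_abs_self _).trans_eq (abs_mul _ _)
      _ ≤ lam * |x i + t * v i| := by gcongr; exact hy i
  have hsum := Finset.sum_le_sum fun i (_ : i ∈ Finset.univ) => hsubgrad i
  simp only [Finset.sum_add_distrib, ← Finset.mul_sum] at hsum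
  have hscaled := mul_le_mul_of_nonneg_left hle hlam
  exact nonpos_of_mul_nonpos_right (by linarith) ht

/-- The choice, nearest to `h`, of an element of `lam • ∂|·|` at `x`. -/
def subgradEntry (lam x h : ℝ) : ℝ := if x = 0 then clip lam h else lam * SignType.sign x

lemma abs_subgradEntry_le {lam : ℝ} (hlam : 0 ≤ lam) (x h : ℝ) : |subgradEntry lam x h| ≤ lam := by
  unfold subgradEntry
  split_ifs with hx
  · exact abs_clip_le hlam h
  · rcases lt_or_gt_of_ne hx with hx | hx <;> simp [hx, abs_of_nonneg hlam]

lemma subgradEntry_mul_self (lam x h : ℝ) : subgradEntry lam x h * x = lam * |x| := by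
  unfold subgradEntry
  split_ifs with hx
  · simp [hx]
  · rw [mul_assoc, sign_mul_self]

lemma measurable_subgradEntry (lam x : ℝ) : Measurable (subgradEntry lam x) := by
  unfold subgradEntry
  split_ifs
  exacts [measurable_clip lam, measurable_const]

variable {n : ℕ}

/-- The indices of the columns of `X` of maximal `l₁`-norm. -/
def maxCols (X : Matrix (Fin n) (Fin n) ℝ) : Finset (Fin n) :=
  Finset.univ.filter fun j => colNorm1 X j = mnorm1 X

/-- The element of the polar of the descent cone at `X` by which `H` is approximated: a subgradient
of the `l₁`-norm, scaled by `lam`, in the maximal columns, and `0` in the others. -/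
def certificate (lam : ℝ) (X H : Matrix (Fin n) (Fin n) ℝ) : Matrix (Fin n) (Fin n) ℝ :=
  Matrix.of fun i j => if j ∈ maxCols X then subgradEntry lam (X i j) (H i j) else 0

lemma abs_certificate_le {lam : ℝ} (hlam : 0 ≤ lam) (X H : Matrix (Fin n) (Fin n) ℝ)
    (i j : Fin n) : |certificate lam X H i j| ≤ lam := by
  rw [certificate, Matrix.of_apply]
  split_ifs
  exacts [abs_subgradEntry_le hlam _ _, abs_zero.trans_le hlam]

/-- A column of maximal norm cannot grow along a descent direction. -/
lemma minner_certificate_nonpos {lam : ℝ} (hlam : 0 ≤ lam) {X U : Matrix (Fin n) (Fin n) ℝ}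
    (hU : U ∈ descCone X) (H : Matrix (Fin n) (Fin n) ℝ) :
    minner (certificate lam X H) U ≤ 0 := by
  obtain ⟨t, ht, hle⟩ := hU
  rw [minner, Finset.sum_comm]
  refine Finset.sum_nonpos fun j _ => ?_
  by_cases hj : j ∈ maxCols X
  · have hcol : colNorm1 (X + t • U) j ≤ colNorm1 X j :=
      ((le_ciSup (Set.finite_range _).bddAbove j).trans hle).trans_eq
        (Finset.mem_filter.1 hj).2.symm
    simp only [certificate, Matrix.of_apply, if_pos hj]
    exact sum_mul_nonpos_of_sum_abs_add_le hlam (fun i => abs_subgradEntry_le hlam _ _)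
      (fun i => subgradEntry_mul_self _ _ _) ht hcol
  · simp [certificate, hj]

end Certificate

section Width

variable {m n : ℕ}

/-- The matrix `U` as a vector of the Euclidean space whose norm is the Frobenius norm. -/
def frobVec (U : Matrix (Fin n) (Fin n) ℝ) : EuclideanSpace ℝ (Fin n × Fin n) :=
  WithLp.toLp 2 fun p => U p.1 p.2

lemma inner_frobVec (U V : Matrix (Fin n) (Fin n) ℝ) :
    inner ℝ (frobVec U) (frobVec V) = minner U V := by
  simp [frobVec, minner, PiLp.inner_apply, Fintype.sum_prod_type, mul_comm]

lemma norm_frobVec (U : Matrix (Fin n) (Fin n) ℝ) : ‖frobVec U‖ = frob U := by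
  simp [frobVec, frob, EuclideanSpace.norm_eq, Fintype.sum_prod_type]

/-- The index set of the supremum defining `Wwidth m X`. -/
def unitDescentDirections (X : Matrix (Fin n) (Fin n) ℝ) :
    Set (EuclideanSpace ℝ (Fin n × Fin n)) :=
  frobVec '' {U ∈ descCone X | frob U = 1}

lemma Wwidth_eq_integral_supportFun (X : Matrix (Fin n) (Fin n) ℝ) :
    Wwidth m X
      = ∫ ω, supportFun (unitDescentDirections X) (frobVec (adjointSample ω))
          ∂(tripleMeasure m n) := by
  refine integral_congr_ae (ae_of_all _ fun ω => congrArg sSup (Set.ext fun c => ?_))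
  simp only [unitDescentDirections, Set.image_image, inner_frobVec, Set.mem_image,
    Set.mem_ofPred_eq, and_assoc, eq_comm (b := c)]
  rfl

lemma memLp_two_adjointSample_sub_certificate_apply (hm : 0 < m) {lam : ℝ} (hlam : 0 ≤ lam)
    (X : Matrix (Fin n) (Fin n) ℝ) (i j : Fin n) :
    MemLp (fun ω => adjointSample ω i j - certificate lam X (adjointSample ω) i j) 2
      (tripleMeasure m n) := by
  have hmeas : Measurable fun ω : Sample m n => certificate lam X (adjointSample ω) i j := by
    simp only [certificate, Matrix.of_apply]
    split_ifs
    exacts [(measurable_subgradEntry lam _).comp (measurable_adjointSample_apply i j),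
      measurable_const]
  exact (memLp_two_adjointSample_apply hm i j).sub <|
    .of_bound hmeas.aestronglyMeasurable lam <| ae_of_all _ fun ω => abs_certificate_le hlam X _ i j

lemma sq_Wwidth_le_sum_integral (hm : 0 < m) {lam : ℝ} (hlam : 0 ≤ lam)
    (X : Matrix (Fin n) (Fin n) ℝ) :
    Wwidth m X ^ 2 ≤ ∑ j, ∑ i, ∫ ω,
      (adjointSample ω i j - certificate lam X (adjointSample ω) i j) ^ 2 ∂(tripleMeasure m n) := by
  let R : Sample m n → EuclideanSpace ℝ (Fin n × Fin n) := fun ω =>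
    frobVec (adjointSample ω) - frobVec (certificate lam X (adjointSample ω))
  have hR : ∀ p, MemLp (fun ω => R ω p) 2 (tripleMeasure m n) := fun p =>
    memLp_two_adjointSample_sub_certificate_apply hm hlam X p.1 p.2
  have hH : ∀ p : Fin n × Fin n,
      Integrable (fun ω => frobVec (adjointSample ω) p) (tripleMeasure m n) := fun p =>
    (memLp_two_adjointSample_apply hm p.1 p.2).integrable one_le_two
  have hmean : ∫ ω, frobVec (adjointSample ω) ∂(tripleMeasure m n) = 0 := by
    ext p
    rw [eval_integral_piLp hH]
    exact integral_adjointSample_apply p.1 p.2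
  have hnorm : ∀ u ∈ unitDescentDirections X, ‖u‖ ≤ 1 := by
    rintro _ ⟨U, hU, rfl⟩
    exact (norm_frobVec U).trans_le hU.2.le
  have hpolar : ∀ ω : Sample m n, ∀ u ∈ unitDescentDirections X,
      inner ℝ (frobVec (certificate lam X (adjointSample ω))) u ≤ 0 := by
    rintro ω _ ⟨U, hU, rfl⟩
    exact (inner_frobVec _ U).trans_le (minner_certificate_nonpos hlam hU.1 _)
  calc Wwidth m X ^ 2 ≤ ∫ ω, ‖R ω‖ ^ 2 ∂(tripleMeasure m n) := by
        rw [Wwidth_eq_integral_supportFun]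
        exact sq_integral_supportFun_le hnorm (integrable_piLp_iff.2 hH) hmean
          (memLp_piLp_iff.2 hR) hpolar
    _ = ∑ p, ∫ ω, R ω p ^ 2 ∂(tripleMeasure m n) := by
        simp_rw [EuclideanSpace.real_norm_sq_eq]
        exact integral_finsetSum _ fun p _ => (hR p).integrable_sq
    _ = _ := Fintype.sum_prod_type_right _

lemma integral_sq_adjointSample_sub_certificate_of_notMem (hm : 0 < m) (lam : ℝ)
    {X : Matrix (Fin n) (Fin n) ℝ} {j : Fin n} (hj : j ∉ maxCols X) (i : Fin n) :
    ∫ ω, (adjointSample ω i j - certificate lam X (adjointSample ω) i j) ^ 2 ∂(tripleMeasure m n)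
      = 1 := by
  simpa [certificate, hj] using integral_sq_adjointSample_apply hm i j

/-- A bound for `E (|H i j| - lam)₊²`, obtained from the exponential moments at `±t`. -/
def excessBound (t lam : ℝ) : ℝ := 4 / t ^ 2 * Real.exp (-(t * lam)) * (√(1 - t ^ 2))⁻¹

lemma integral_sq_adjointSample_sub_clip_le (hm : 0 < m) {t lam : ℝ} (ht : 0 < t)
    (ht_sq : t ^ 2 < 1) (hlam : 0 ≤ lam) (i j : Fin n) :
    ∫ ω, (adjointSample ω i j - clip lam (adjointSample ω i j)) ^ 2 ∂(tripleMeasure m n)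
      ≤ excessBound t lam := by
  have hneg_sq : (-t) ^ 2 < 1 := by rwa [neg_sq]
  have hmgf := mgf_adjointSample_apply_le hm i j ht_sq
  have hmgf_neg := mgf_adjointSample_apply_le hm i j hneg_sq
  rw [neg_sq] at hmgf_neg
  calc _ ≤ 2 / t ^ 2 * Real.exp (-(t * lam)) *
          (mgf (fun ω => adjointSample ω i j) (tripleMeasure m n) t
            + mgf (fun ω => adjointSample ω i j) (tripleMeasure m n) (-t)) :=
        integral_sq_sub_clip_le hlam ht (integrable_exp_mul_adjointSample_apply hm i j ht_sq)
          (integrable_exp_mul_adjointSample_apply hm i j hneg_sq)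
    _ ≤ 2 / t ^ 2 * Real.exp (-(t * lam)) * ((√(1 - t ^ 2))⁻¹ + (√(1 - t ^ 2))⁻¹) := by gcongr
    _ = excessBound t lam := by rw [excessBound]; ring

lemma integral_sq_adjointSample_sub_certificate_le_of_mem (hm : 0 < m) {t lam : ℝ} (ht : 0 < t)
    (ht_sq : t ^ 2 < 1) (hlam : 0 ≤ lam) {X : Matrix (Fin n) (Fin n) ℝ} {j : Fin n}
    (hj : j ∈ maxCols X) (i : Fin n) :
    ∫ ω, (adjointSample ω i j - certificate lam X (adjointSample ω) i j) ^ 2 ∂(tripleMeasure m n)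
      ≤ (if X i j ≠ 0 then 1 + lam ^ 2 else 0) + excessBound t lam := by
  by_cases hX : X i j = 0
  · simpa [certificate, hj, subgradEntry, hX]
      using integral_sq_adjointSample_sub_clip_le hm ht ht_sq hlam i j
  · have hsign : (SignType.sign (X i j) : ℝ) ^ 2 = 1 := by
      rcases lt_or_gt_of_ne hX with h | h <;> simp [h]
    have hexcess : 0 ≤ excessBound t lam := by unfold excessBound; positivity
    simp only [certificate, Matrix.of_apply, if_pos hj, subgradEntry, if_neg hX]
    rw [integral_sq_sub_const (memLp_two_adjointSample_apply hm i j)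
      (integral_adjointSample_apply i j), integral_sq_adjointSample_apply hm, mul_pow, hsign,
      mul_one]
    exact (le_add_of_nonneg_right hexcess).trans_eq (by rw [if_pos hX])

lemma sum_ite_ne_zero_le {s : ℕ} {X : Matrix (Fin n) (Fin n) ℝ} (hX : ColSparse s X) (j : Fin n)
    {a : ℝ} (ha : 0 ≤ a) : ∑ i, (if X i j ≠ 0 then a else 0) ≤ s * a := by
  rw [← Finset.sum_filter, Finset.sum_const, nsmul_eq_mul]
  gcongr
  exact hX j

lemma sum_integral_sq_le_of_mem (hm : 0 < m) {s : ℕ} {t lam : ℝ} (ht : 0 < t)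
    (ht_sq : t ^ 2 < 1) (hlam : 0 ≤ lam) {X : Matrix (Fin n) (Fin n) ℝ} (hX : ColSparse s X)
    {j : Fin n} (hj : j ∈ maxCols X) :
    ∑ i, ∫ ω, (adjointSample ω i j - certificate lam X (adjointSample ω) i j) ^ 2
        ∂(tripleMeasure m n) ≤ s * (1 + lam ^ 2) + n * excessBound t lam := by
  calc _ ≤ ∑ i, ((if X i j ≠ 0 then 1 + lam ^ 2 else 0) + excessBound t lam) :=
        Finset.sum_le_sum fun i _ =>
          integral_sq_adjointSample_sub_certificate_le_of_mem hm ht ht_sq hlam hj i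
    _ = ∑ i, (if X i j ≠ 0 then 1 + lam ^ 2 else 0) + n * excessBound t lam := by
        simp [Finset.sum_add_distrib]
    _ ≤ s * (1 + lam ^ 2) + n * excessBound t lam := by
        gcongr
        exact sum_ite_ne_zero_le hX j (by positivity)

lemma sq_Wwidth_le (hm : 0 < m) {s : ℕ} {t lam : ℝ} (ht : 0 < t) (ht_sq : t ^ 2 < 1)
    (hlam : 0 ≤ lam) {X : Matrix (Fin n) (Fin n) ℝ} (hX : ColSparse s X) :
    Wwidth m X ^ 2 ≤ (n - (maxCols X).card : ℝ) * n
      + (maxCols X).card * (s * (1 + lam ^ 2) + n * excessBound t lam) := by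
  refine (sq_Wwidth_le_sum_integral hm hlam X).trans ?_
  rw [← Finset.sum_compl_add_sum (maxCols X)]
  refine add_le_add (le_of_eq ?_) ?_
  · rw [Finset.sum_congr rfl fun j hj => Finset.sum_congr rfl fun i _ =>
      integral_sq_adjointSample_sub_certificate_of_notMem hm lam (Finset.mem_compl.1 hj) i]
    have hcard : (maxCols X).card ≤ n := card_finset_fin_le _
    simp [Finset.card_compl, Nat.cast_sub hcard]
  · rw [← nsmul_eq_mul]
    exact Finset.sum_le_card_nsmul _ _ _ fun j hj =>
      sum_integral_sq_le_of_mem hm ht ht_sq hlam hX hj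

end Width

section Threshold

lemma log_exp_six_mul {N R : ℝ} (hN : 0 < N) (hR : 0 < R) :
    Real.log (Real.exp 6 * N ^ 2 * R) = 6 + 2 * Real.log N + Real.log R := by
  rw [Real.log_mul (by positivity) hR.ne', Real.log_mul (by positivity) (by positivity),
    Real.log_exp, Real.log_pow, Nat.cast_two]

lemma six_le_log_exp_six_mul {N R : ℝ} (hN : 1 ≤ N) (hR : 1 ≤ R) :
    6 ≤ Real.log (Real.exp 6 * N ^ 2 * R) := by
  rw [log_exp_six_mul (by linarith) (by linarith)]
  linarith [Real.log_nonneg hN, Real.log_nonneg hR]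

lemma excessBound_four_fifths_le (lam : ℝ) :
    excessBound (4 / 5) lam ≤ Real.exp (4 - 4 / 5 * lam) := by
  have hsqrt : √(1 - (4 / 5 : ℝ) ^ 2) = 3 / 5 := by
    rw [show (1 - (4 / 5 : ℝ) ^ 2) = (3 / 5) ^ 2 by norm_num, Real.sqrt_sq (by norm_num)]
  have hexp : (125 / 12 : ℝ) ≤ Real.exp 4 := by
    have hquad := Real.quadratic_le_exp_of_nonneg (x := 4) (by norm_num)
    linarith
  calc excessBound (4 / 5) lam = 125 / 12 * Real.exp (-(4 / 5 * lam)) := by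
        rw [excessBound, hsqrt]
        ring
    _ ≤ Real.exp 4 * Real.exp (-(4 / 5 * lam)) := by gcongr
    _ = Real.exp (4 - 4 / 5 * lam) := by rw [← Real.exp_add, sub_eq_add_neg]

lemma mul_excessBound_le_one {N R : ℝ} (hR : 1 ≤ R) (hRN : R ≤ N) :
    R * (N * excessBound (4 / 5) (Real.log (Real.exp 6 * N ^ 2 * R) - 1)) ≤ 1 := by
  have hR_pos : 0 < R := by linarith
  have hN_pos : 0 < N := by linarith
  have hlogR : 0 ≤ Real.log R := Real.log_nonneg hR
  have hlogRN : Real.log R ≤ Real.log N := Real.log_le_log hR_pos hRN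
  rw [log_exp_six_mul hN_pos hR_pos]
  calc R * (N * excessBound (4 / 5) (6 + 2 * Real.log N + Real.log R - 1))
      ≤ Real.exp (Real.log R) * (Real.exp (Real.log N)
          * Real.exp (4 - 4 / 5 * (6 + 2 * Real.log N + Real.log R - 1))) := by
        rw [Real.exp_log hR_pos, Real.exp_log hN_pos]
        gcongr
        exact excessBound_four_fifths_le _
    _ ≤ 1 := by
        rw [← Real.exp_add, ← Real.exp_add, Real.exp_le_one_iff]
        linarith

lemma maxCols_nonempty {n : ℕ} (hn : 0 < n) (X : Matrix (Fin n) (Fin n) ℝ) :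
    (maxCols X).Nonempty := by
  have : Nonempty (Fin n) := ⟨⟨0, hn⟩⟩
  obtain ⟨j, hj⟩ := exists_eq_ciSup_of_finite (f := colNorm1 X)
  exact ⟨j, Finset.mem_filter.2 ⟨Finset.mem_univ j, hj⟩⟩

lemma sq_Wwidth_le_log {m n s : ℕ} (hn : 0 < n) (hm : 0 < m) {X : Matrix (Fin n) (Fin n) ℝ}
    (hX : ColSparse s X) :
    Wwidth m X ^ 2 ≤ 1 + (n : ℝ) ^ 2 - (maxCols X).card *
      (n - s * Real.log (Real.exp 6 * n ^ 2 * (maxCols X).card) ^ 2) := by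
  have hr : (1 : ℝ) ≤ (maxCols X).card := by
    exact_mod_cast Finset.card_pos.2 (maxCols_nonempty hn X)
  have hrn : ((maxCols X).card : ℝ) ≤ n := by exact_mod_cast card_finset_fin_le (maxCols X)
  have hexcess := mul_excessBound_le_one hr hrn
  have hL := six_le_log_exp_six_mul (hr.trans hrn) hr
  set r := ((maxCols X).card : ℝ)
  set L := Real.log (Real.exp 6 * n ^ 2 * r)
  have hsq : 1 + (L - 1) ^ 2 ≤ L ^ 2 := by nlinarith
  calc Wwidth m X ^ 2
      ≤ (n - r) * n + r * (s * (1 + (L - 1) ^ 2) + n * excessBound (4 / 5) (L - 1)) :=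
        sq_Wwidth_le hm (by norm_num) (by norm_num) (by linarith) hX
    _ ≤ (n - r) * n + r * (s * L ^ 2 + n * excessBound (4 / 5) (L - 1)) := by gcongr
    _ ≤ 1 + (n : ℝ) ^ 2 - r * (n - s * L ^ 2) := by linarith

end Threshold

/-- bound on the squared width W²(Γ_X; Φ_{A,B}) for Gaussian A, B
(Lemma 6.1). -/
theorem width_bound_gaussian_AB :
    ∃ c : ℝ, 0 < c ∧ ∀ n m s : ℕ, 0 < n → 0 < m → 0 < s →
      ∀ X : Matrix (Fin n) (Fin n) ℝ, ColSparse s X →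
        ∀ r : ℕ,
          r = ((Finset.univ : Finset (Fin n)).filter fun j => colNorm1 X j = mnorm1 X).card →
          (Wwidth m X)^2
              ≤ 1 + (n : ℝ)^2 - r * (n - s * (Real.log (c * n^2 * r))^2)
            ∧ (r = n → (Wwidth m X)^2 ≤ 1 + (n : ℝ) * s * (Real.log (c * n^3))^2) := by
  refine ⟨Real.exp 6, Real.exp_pos 6, ?_⟩
  rintro n m s hn hm - X hX r hr
  have hbound : Wwidth m X ^ 2 ≤ 1 + (n : ℝ) ^ 2
      - r * (n - s * Real.log (Real.exp 6 * n ^ 2 * r) ^ 2) := by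
    rw [hr]
    exact sq_Wwidth_le_log hn hm hX
  refine ⟨hbound, ?_⟩
  rintro rfl
  rw [mul_assoc, ← pow_succ] at hbound
  linarith

end
end

section
/- Let a, b ∈ ℝ^n be independent random vectors with i.i.d. standard Gaussian N(0,1) entries and set M := a b^T. Then for every U ∈ ℝ^{n×n} with ‖U‖_F = 1, E[⟨M, U⟩²] = 1, and there exists an absolute constant c > 0 such that P[|⟨M, U⟩| ≥ 1/√2] ≥ c for every such U. -/
/-!
Let `x` be a random vector whose linear forms satisfy `E⟨x, c⟩² = |c|²` and `E⟨x, c⟩⁴ ≤ K |c|⁴`;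
a standard Gaussian vector does, with `K = 3`, because `⟨x, c⟩` has law `N(0, |c|²)`. Let `a` and
`b` be independent vectors of this kind, with constants `K` and `L`. For fixed `a`, the chaos
`X = ⟨a bᵀ, U⟩` is the linear form `⟨b, Uᵀa⟩`, so its conditional second moment is `|Uᵀa|²` and its
conditional fourth moment is at most `L |Uᵀa|⁴`. The coordinates of `Uᵀa` are linear forms in `a`;
integrating over `a` gives `E X² = ‖U‖_F²`, and Minkowski's inequality in `L²`, applied to the sum
`|Uᵀa|² = ∑ⱼ ⟨a, uⱼ⟩²` over the columns `uⱼ` of `U`, gives `E X⁴ ≤ K L ‖U‖_F⁴`. The Paley–Zygmund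
inequality for `X²` turns these two moments into the small-ball estimate.
-/

open scoped BigOperators
open scoped Classical

noncomputable section

open MeasureTheory ProbabilityTheory

/-- Joint law of a pair (a, b) of independent standard Gaussian vectors in ℝⁿ. -/
def pairGauss (n : ℕ) : Measure ((Fin n → ℝ) × (Fin n → ℝ)) :=
  (Measure.pi fun _ : Fin n => gaussianReal 0 1).prod
    (Measure.pi fun _ : Fin n => gaussianReal 0 1)

open scoped Matrix NNReal

section L2Inequalities

variable {Ω : Type*} {mΩ : MeasurableSpace Ω} {μ : Measure Ω}

lemma lpNorm_two_eq_sqrt_integral_sq {f : Ω → ℝ} (hf : AEStronglyMeasurable f μ) :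
    lpNorm f 2 μ = √(∫ ω, f ω ^ 2 ∂μ) := by
  simp [lpNorm_eq_integral_norm_rpow_toReal, hf, Real.sqrt_eq_rpow]

lemma sqrt_integral_sum_sq_le {κ : Type*} {s : Finset κ} {f : κ → Ω → ℝ}
    (hf : ∀ j ∈ s, MemLp (f j) 2 μ) :
    √(∫ ω, (∑ j ∈ s, f j ω) ^ 2 ∂μ) ≤ ∑ j ∈ s, √(∫ ω, f j ω ^ 2 ∂μ) := by
  have h := lpNorm_sum_le hf one_le_two
  rw [lpNorm_two_eq_sqrt_integral_sq (memLp_finsetSum' s hf).aestronglyMeasurable,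
    Finset.sum_congr rfl fun j hj =>
      lpNorm_two_eq_sqrt_integral_sq (hf j hj).aestronglyMeasurable] at h
  simpa only [Finset.sum_apply] using h

lemma sq_integral_mul_le {f g : Ω → ℝ} (hf : MemLp f 2 μ) (hg : MemLp g 2 μ) :
    (∫ ω, f ω * g ω ∂μ) ^ 2 ≤ (∫ ω, f ω ^ 2 ∂μ) * ∫ ω, g ω ^ 2 ∂μ := by
  have inner_toLp {u v : Ω → ℝ} (hu : MemLp u 2 μ) (hv : MemLp v 2 μ) :
      inner ℝ (hu.toLp u) (hv.toLp v) = ∫ ω, u ω * v ω ∂μ := by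
    rw [L2.inner_def]
    refine integral_congr_ae ?_
    filter_upwards [hu.coeFn_toLp, hv.coeFn_toLp] with ω hω hω'
    simp [hω, hω', mul_comm]
  simpa only [inner_toLp, sq] using real_inner_mul_inner_self_le (hf.toLp f) (hg.toLp g)

lemma paley_zygmund [IsProbabilityMeasure μ] {f : Ω → ℝ} (hf : MemLp f 2 μ) (hf0 : 0 ≤ᵐ[μ] f)
    {θ : ℝ} (hθ0 : 0 ≤ θ) (hθ1 : θ ≤ 1) :
    (1 - θ) ^ 2 * (∫ ω, f ω ∂μ) ^ 2
      ≤ (∫ ω, f ω ^ 2 ∂μ) * μ.real {ω | θ * ∫ ω', f ω' ∂μ ≤ f ω} := by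
  set m := ∫ ω, f ω ∂μ
  set A : Set Ω := {ω | θ * m ≤ f ω}
  have hm : 0 ≤ m := integral_nonneg_of_ae hf0
  have hfi : Integrable f μ := hf.integrable one_le_two
  have hA : NullMeasurableSet A μ := nullMeasurableSet_le aemeasurable_const hf.aemeasurable
  have hcompl : ∫ ω in Aᶜ, f ω ∂μ ≤ θ * m := calc
    ∫ ω in Aᶜ, f ω ∂μ ≤ ∫ _ in Aᶜ, θ * m ∂μ :=
      setIntegral_mono_on₀ hfi.integrableOn integrableOn_const hA.compl
        fun ω (hω : ¬θ * m ≤ f ω) => (not_le.mp hω).le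
    _ = μ.real Aᶜ * (θ * m) := by simp
    _ ≤ θ * m := mul_le_of_le_one_left (mul_nonneg hθ0 hm) measureReal_le_one
  have hsplit : (1 - θ) * m ≤ ∫ ω in A, f ω ∂μ := by
    linarith [integral_add_compl₀ hA hfi]
  calc (1 - θ) ^ 2 * m ^ 2 = ((1 - θ) * m) ^ 2 := (mul_pow _ _ _).symm
    _ ≤ (∫ ω in A, f ω * 1 ∂μ) ^ 2 := by
      simpa using pow_le_pow_left₀ (mul_nonneg (sub_nonneg.mpr hθ1) hm) hsplit 2
    _ ≤ (∫ ω in A, f ω ^ 2 ∂μ) * ∫ _ in A, 1 ^ 2 ∂μ :=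
      sq_integral_mul_le (hf.restrict A) (memLp_const 1)
    _ = (∫ ω in A, f ω ^ 2 ∂μ) * μ.real A := by simp
    _ ≤ (∫ ω, f ω ^ 2 ∂μ) * μ.real A := by
      refine mul_le_mul_of_nonneg_right ?_ measureReal_nonneg
      exact setIntegral_le_integral hf.integrable_sq (ae_of_all _ fun ω => sq_nonneg (f ω))

lemma memLp_two_sq_of_memLp_four {f : Ω → ℝ} (hf : MemLp f 4 μ) : MemLp (fun ω => f ω ^ 2) 2 μ := by
  have : ENNReal.HolderTriple 4 4 2 := ⟨by
    rw [← two_mul, show (4 : ENNReal) = 2 * 2 by norm_num, ENNReal.mul_inv (by simp) (by simp),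
      ← mul_assoc, ENNReal.mul_inv_cancel (by simp) (by simp), one_mul]⟩
  simpa only [sq] using! hf.mul hf

end L2Inequalities

lemma memLp_mul_prod {α β R : Type*} [MeasurableSpace α] [MeasurableSpace β] [NormedField R]
    {μ : Measure α} {ν : Measure β} {p : ENNReal} {f : α → R} {g : β → R}
    (hp0 : p ≠ 0) (hp : p ≠ ⊤) (hf : MemLp f p μ) (hg : MemLp g p ν) :
    MemLp (fun z : α × β => f z.1 * g z.2) p (μ.prod ν) := by
  have hmeas : AEStronglyMeasurable (fun z : α × β => f z.1 * g z.2) (μ.prod ν) :=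
    hf.aestronglyMeasurable.comp_fst.mul hg.aestronglyMeasurable.comp_snd
  rw [← integrable_norm_rpow_iff hmeas hp0 hp]
  simpa only [norm_mul, Real.mul_rpow (norm_nonneg _) (norm_nonneg _)] using
    (hf.integrable_norm_rpow hp0 hp).mul_prod (hg.integrable_norm_rpow hp0 hp)

section Isotropic

variable {ι κ : Type*} [Fintype ι] [Fintype κ]

/-- The law `μ` of a random vector `x` is isotropic, `E⟨x, c⟩² = |c|²`, and its linear forms satisfy
the `L⁴`–`L²` moment comparison `E⟨x, c⟩⁴ ≤ K (E⟨x, c⟩²)²`. -/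
structure IsIsotropicL4 (μ : Measure (ι → ℝ)) (K : ℝ≥0) : Prop where
  memLp_eval : ∀ i, MemLp (fun x => x i) 4 μ
  integral_dotProduct_sq : ∀ c, ∫ x, (x ⬝ᵥ c) ^ 2 ∂μ = ∑ i, c i ^ 2
  integral_dotProduct_pow_four_le : ∀ c, ∫ x, (x ⬝ᵥ c) ^ 4 ∂μ ≤ K * (∑ i, c i ^ 2) ^ 2

lemma IsIsotropicL4.memLp_dotProduct {μ : Measure (ι → ℝ)} {K : ℝ≥0} (hμ : IsIsotropicL4 μ K)
    (c : ι → ℝ) : MemLp (fun x => x ⬝ᵥ c) 4 μ :=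
  memLp_finsetSum _ fun i _ => (hμ.memLp_eval i).mul_const (c i)

lemma IsIsotropicL4.integral_sum_vecMul_sq {μ : Measure (ι → ℝ)} [IsFiniteMeasure μ]
    {K : ℝ≥0} (hμ : IsIsotropicL4 μ K) (U : Matrix ι κ ℝ) :
    ∫ a, ∑ j, (a ᵥ* U) j ^ 2 ∂μ = ∑ i, ∑ j, U i j ^ 2 := by
  have hint (j : κ) : Integrable (fun a => (a ᵥ* U) j ^ 2) μ :=
    ((hμ.memLp_dotProduct (U.col j)).mono_exponent (by norm_num)).integrable_sq
  rw [integral_finsetSum _ fun j _ => hint j, Finset.sum_comm]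
  exact Finset.sum_congr rfl fun j _ => hμ.integral_dotProduct_sq (U.col j)

lemma IsIsotropicL4.integral_sum_vecMul_sq_sq_le {μ : Measure (ι → ℝ)}
    {K : ℝ≥0} (hμ : IsIsotropicL4 μ K) (U : Matrix ι κ ℝ) :
    ∫ a, (∑ j, (a ᵥ* U) j ^ 2) ^ 2 ∂μ ≤ K * (∑ i, ∑ j, U i j ^ 2) ^ 2 := by
  have hcol (j : κ) : √(∫ a, ((a ᵥ* U) j ^ 2) ^ 2 ∂μ) ≤ √K * ∑ i, U i j ^ 2 := by
    refine Real.sqrt_le_iff.mpr ⟨by positivity, ?_⟩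
    rw [mul_pow, Real.sq_sqrt K.coe_nonneg]
    simpa only [← pow_mul] using! hμ.integral_dotProduct_pow_four_le (U.col j)
  have hsqrt : √(∫ a, (∑ j, (a ᵥ* U) j ^ 2) ^ 2 ∂μ) ≤ √K * ∑ i, ∑ j, U i j ^ 2 := calc
    _ ≤ ∑ j, √(∫ a, ((a ᵥ* U) j ^ 2) ^ 2 ∂μ) :=
      sqrt_integral_sum_sq_le fun j _ => memLp_two_sq_of_memLp_four (hμ.memLp_dotProduct (U.col j))
    _ ≤ ∑ j, √K * ∑ i, U i j ^ 2 := Finset.sum_le_sum fun j _ => hcol j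
    _ = √K * ∑ i, ∑ j, U i j ^ 2 := by rw [← Finset.mul_sum, Finset.sum_comm]
  simpa only [mul_pow, Real.sq_sqrt K.coe_nonneg] using (Real.sqrt_le_iff.mp hsqrt).2

/-- The rank-one chaos `⟨a bᵀ, U⟩` at the pair `ω = (a, b)`, written as the linear form `⟨b, Uᵀa⟩`
in `b`. -/
def rankOneChaos (U : Matrix ι κ ℝ) (ω : (ι → ℝ) × (κ → ℝ)) : ℝ := ω.2 ⬝ᵥ (ω.1 ᵥ* U)

lemma rankOneChaos_eq_sum (U : Matrix ι κ ℝ) (ω : (ι → ℝ) × (κ → ℝ)) :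
    rankOneChaos U ω = ∑ i, ∑ j, ω.1 i * ω.2 j * U i j := by
  simp only [rankOneChaos, dotProduct, Matrix.vecMul, Finset.mul_sum]
  rw [Finset.sum_comm]
  exact Finset.sum_congr rfl fun i _ => Finset.sum_congr rfl fun j _ => by ring

variable {μ : Measure (ι → ℝ)} {ν : Measure (κ → ℝ)} {K L : ℝ≥0}

lemma memLp_rankOneChaos (hμ : IsIsotropicL4 μ K) (hν : IsIsotropicL4 ν L) (U : Matrix ι κ ℝ) :
    MemLp (rankOneChaos U) 4 (μ.prod ν) := by
  simp only [funext (rankOneChaos_eq_sum U)]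
  exact memLp_finsetSum _ fun i _ => memLp_finsetSum _ fun j _ =>
    (memLp_mul_prod (by simp) (by simp) (hμ.memLp_eval i) (hν.memLp_eval j)).mul_const (U i j)

lemma integral_rankOneChaos_sq [IsFiniteMeasure μ] [IsFiniteMeasure ν]
    (hμ : IsIsotropicL4 μ K) (hν : IsIsotropicL4 ν L) (U : Matrix ι κ ℝ) :
    ∫ ω, rankOneChaos U ω ^ 2 ∂(μ.prod ν) = ∑ i, ∑ j, U i j ^ 2 := by
  rw [integral_prod _ ((memLp_rankOneChaos hμ hν U).mono_exponent (by norm_num)).integrable_sq]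
  simp only [rankOneChaos, hν.integral_dotProduct_sq, hμ.integral_sum_vecMul_sq]

lemma integral_rankOneChaos_pow_four_le [SFinite μ] [SFinite ν]
    (hμ : IsIsotropicL4 μ K) (hν : IsIsotropicL4 ν L) (U : Matrix ι κ ℝ) :
    ∫ ω, rankOneChaos U ω ^ 4 ∂(μ.prod ν) ≤ K * L * (∑ i, ∑ j, U i j ^ 2) ^ 2 := by
  have hX4 : Integrable (fun ω => rankOneChaos U ω ^ 4) (μ.prod ν) := by
    simpa only [← pow_mul] using
      (memLp_two_sq_of_memLp_four (memLp_rankOneChaos hμ hν U)).integrable_sq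
  have hint : Integrable (fun a => (∑ j, (a ᵥ* U) j ^ 2) ^ 2) μ :=
    (memLp_finsetSum _ fun j _ =>
      memLp_two_sq_of_memLp_four (hμ.memLp_dotProduct (U.col j))).integrable_sq
  calc ∫ ω, rankOneChaos U ω ^ 4 ∂(μ.prod ν)
      = ∫ a, ∫ b, (b ⬝ᵥ (a ᵥ* U)) ^ 4 ∂ν ∂μ := integral_prod _ hX4
    _ ≤ ∫ a, L * (∑ j, (a ᵥ* U) j ^ 2) ^ 2 ∂μ :=
      integral_mono hX4.integral_prod_left (hint.const_mul _)
        fun a => hν.integral_dotProduct_pow_four_le (a ᵥ* U)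
    _ = L * ∫ a, (∑ j, (a ᵥ* U) j ^ 2) ^ 2 ∂μ := integral_const_mul _ _
    _ ≤ L * (K * (∑ i, ∑ j, U i j ^ 2) ^ 2) := by
      gcongr
      exact hμ.integral_sum_vecMul_sq_sq_le U
    _ = K * L * (∑ i, ∑ j, U i j ^ 2) ^ 2 := by ring

theorem rank_one_gaussian_chaos_general [IsProbabilityMeasure μ] [IsProbabilityMeasure ν]
    (hμ : IsIsotropicL4 μ K) (hν : IsIsotropicL4 ν L) {U : Matrix ι κ ℝ}
    (hU : ∑ i, ∑ j, U i j ^ 2 = 1) :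
    ∫ ω, (∑ i, ∑ j, ω.1 i * ω.2 j * U i j) ^ 2 ∂(μ.prod ν) = 1 ∧
      ENNReal.ofReal (1 / (4 * (K * L)))
        ≤ (μ.prod ν) {ω | 1 / √2 ≤ |∑ i, ∑ j, ω.1 i * ω.2 j * U i j|} := by
  simp only [← rankOneChaos_eq_sum]
  have hsq : ∫ ω, rankOneChaos U ω ^ 2 ∂(μ.prod ν) = 1 :=
    (integral_rankOneChaos_sq hμ hν U).trans hU
  have hfour : ∫ ω, (rankOneChaos U ω ^ 2) ^ 2 ∂(μ.prod ν) ≤ K * L := by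
    simpa only [← pow_mul, hU, one_pow, mul_one] using! integral_rankOneChaos_pow_four_le hμ hν U
  have hset : {ω | 1 / √2 ≤ |rankOneChaos U ω|} = {ω | 1 / 2 * 1 ≤ rankOneChaos U ω ^ 2} := by
    ext ω
    simp [← Real.sqrt_sq_eq_abs, ← Real.sqrt_inv, Real.sqrt_le_sqrt_iff (sq_nonneg _)]
  refine ⟨hsq, ENNReal.ofReal_le_of_le_toReal ?_⟩
  have hPZ := paley_zygmund (memLp_two_sq_of_memLp_four (memLp_rankOneChaos hμ hν U))
    (ae_of_all _ fun ω => sq_nonneg (rankOneChaos U ω)) (θ := 1 / 2) (by norm_num) (by norm_num)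
  rw [hsq, ← hset] at hPZ
  have hmul : 1 / 4 ≤ (K * L : ℝ) * (μ.prod ν).real {ω | 1 / √2 ≤ |rankOneChaos U ω|} := by
    linarith [mul_le_mul_of_nonneg_right hfour
      (measureReal_nonneg (μ := μ.prod ν) (s := {ω | 1 / √2 ≤ |rankOneChaos U ω|}))]
  have hKL : (0 : ℝ) < K * L := pos_of_mul_pos_left (by linarith) measureReal_nonneg
  rw [← measureReal_def, div_le_iff₀ (by positivity)]
  linarith

end Isotropic

section Gaussian

lemma iteratedDeriv_succ_id_mul_zero {𝕜 : Type*} [NontriviallyNormedField 𝕜] {n : ℕ} {f : 𝕜 → 𝕜}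
    (hf : ContDiffAt 𝕜 (n + 1) f 0) :
    iteratedDeriv (n + 1) (fun t => t * f t) 0 = (n + 1) * iteratedDeriv n f 0 := by
  rw [iteratedDeriv_fun_mul contDiffAt_id (mod_cast hf)]
  simp [iteratedDeriv_fun_id_zero]

lemma integral_pow_add_two_gaussianReal (v : ℝ≥0) (n : ℕ) :
    ∫ x, x ^ (n + 2) ∂gaussianReal 0 v = (n + 1) * v * ∫ x, x ^ n ∂gaussianReal 0 v := by
  set M : ℝ → ℝ := mgf id (gaussianReal 0 v)
  have hM : M = fun t => Real.exp (v * t ^ 2 / 2) := by simp [M, mgf_id_gaussianReal]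
  have hmoment (k : ℕ) : iteratedDeriv k M 0 = ∫ x, x ^ k ∂gaussianReal 0 v := by
    simpa using iteratedDeriv_mgf_zero (X := id) (μ := gaussianReal 0 v) (by simp) k
  have hderiv : deriv M = fun t => v * (t * M t) := by
    ext t
    rw [hM, (((hasDerivAt_pow 2 t).const_mul (v : ℝ)).div_const 2).exp.deriv]
    ring
  have hsmooth : ContDiffAt ℝ (n + 1) M 0 := by
    rw [hM]
    fun_prop
  rw [← hmoment, ← hmoment, iteratedDeriv_succ', hderiv, iteratedDeriv_const_mul_field,
    iteratedDeriv_succ_id_mul_zero hsmooth]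
  ring

variable {ι : Type*} [Fintype ι]

lemma map_dotProduct_pi_gaussianReal (c : ι → ℝ) :
    (Measure.pi fun _ : ι => gaussianReal 0 1).map (fun x => x ⬝ᵥ c)
      = gaussianReal 0 (∑ i, c i ^ 2).toNNReal := by
  set ℓ : StrongDual ℝ (EuclideanSpace ℝ ι) := innerSL ℝ (WithLp.toLp 2 c)
  calc (Measure.pi fun _ : ι => gaussianReal 0 1).map (fun x => x ⬝ᵥ c)
      = (stdGaussian (EuclideanSpace ℝ ι)).map ℓ := by
        rw [← map_pi_eq_stdGaussian, Measure.map_map (by fun_prop) (by fun_prop)]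
        rfl
    _ = gaussianReal 0 (∑ i, c i ^ 2).toNNReal := by
        rw [IsGaussian.map_eq_gaussianReal, integral_strongDual_stdGaussian,
          variance_dual_stdGaussian, innerSL_apply_norm, EuclideanSpace.real_norm_sq_eq]

lemma integral_dotProduct_pow_pi_gaussianReal (c : ι → ℝ) (k : ℕ) :
    ∫ x, (x ⬝ᵥ c) ^ k ∂(Measure.pi fun _ : ι => gaussianReal 0 1)
      = ∫ y, y ^ k ∂gaussianReal 0 (∑ i, c i ^ 2).toNNReal := by
  rw [← map_dotProduct_pi_gaussianReal, integral_map (by fun_prop) (by fun_prop)]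

lemma isIsotropicL4_pi_gaussianReal :
    IsIsotropicL4 (Measure.pi fun _ : ι => gaussianReal 0 1) 3 where
  memLp_eval i := (memLp_id_gaussianReal 4).comp_measurePreserving
    (measurePreserving_eval (fun _ : ι => gaussianReal 0 1) i)
  integral_dotProduct_sq c := by
    have hc : 0 ≤ ∑ i, c i ^ 2 := by positivity
    simp [integral_dotProduct_pow_pi_gaussianReal, integral_pow_add_two_gaussianReal _ 0, hc]
  integral_dotProduct_pow_four_le c := by
    have hc : 0 ≤ ∑ i, c i ^ 2 := by positivity
    rw [integral_dotProduct_pow_pi_gaussianReal, integral_pow_add_two_gaussianReal _ 2,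
      integral_pow_add_two_gaussianReal _ 0, Real.coe_toNNReal _ hc]
    refine le_of_eq ?_
    simp only [pow_zero, integral_const, probReal_univ, smul_eq_mul, Nat.cast_zero,
      Nat.cast_ofNat, NNReal.coe_ofNat]
    ring

end Gaussian

/-- second moment identity and small-ball estimate for the Gaussian
rank-one chaos ⟨a bᵀ, U⟩ (Lemma 6.2). -/
theorem rank_one_gaussian_chaos :
    (∀ (n : ℕ) (U : Matrix (Fin n) (Fin n) ℝ), frob U = 1 →
        ∫ ω, (minner (Matrix.of fun i j => ω.1 i * ω.2 j) U)^2 ∂(pairGauss n) = 1)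
    ∧ ∃ c : ℝ, 0 < c ∧
        ∀ (n : ℕ) (U : Matrix (Fin n) (Fin n) ℝ), frob U = 1 →
          ENNReal.ofReal c
            ≤ pairGauss n
                {ω | 1 / Real.sqrt 2 ≤ |minner (Matrix.of fun i j => ω.1 i * ω.2 j) U|} := by
  have hmain {n : ℕ} {U : Matrix (Fin n) (Fin n) ℝ} (hU : frob U = 1) :=
    rank_one_gaussian_chaos_general (ι := Fin n) (κ := Fin n) isIsotropicL4_pi_gaussianReal
      isIsotropicL4_pi_gaussianReal (Real.sqrt_eq_one.mp hU)
  exact ⟨fun n U hU => (hmain hU).1, _, by norm_num, fun n U hU => (hmain hU).2⟩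

end
end
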